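/- Assume q < |a_1⋯a_{n+1} b_1⋯b_{n+1}|, and let x ∈ (ℂ^*)ⁿ satisfy x_i/x_j ∉ qᶻ for 1 ≤ i < j ≤ n and x_i · (x_1⋯x_n) · d⁻¹ ∉ qᶻ for 1 ≤ i ≤ n. Then 𝒦(x) = 𝒦₀(x) · (q a_1⁻¹⋯a_{n+1}⁻¹ d)_∞ (q b_1⁻¹⋯b_{n+1}⁻¹ d⁻¹)_∞ ∏_{i=1}^{n+1} ∏_{j=1}^{n+1} (q a_i⁻¹ b_j⁻¹)_∞ / (q a_1⁻¹⋯a_{n+1}⁻¹ b_1⁻¹⋯b_{n+1}⁻¹)_∞, where 𝒦₀(x) := (1−q)ⁿ Σ_{ν∈ℤⁿ} 1 / ∏_{1≤i<j≤n+1} (q z_i/z_j)_∞ (q z_j/z_i)_∞; moreover 𝒦₀(x) = (1−q)ⁿ (q)_∞ⁿ (the Macdonald identity for A_n^{(1)} in Milne's form). (Corollary 5.7 of the paper.) -/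

import Mathlib

/-!
The parameters are replaced by their inverses, so that `0` becomes an admissible value. Put
`A = ∏ a_j` and `B = ∏ b_j`, and write `J(a, b)` for the sum of `jacksonTerm q a b z` over the
lattice points `z = (x_i q^{l_i})`, `∑ l_i = 0`.

The summand is `kernel · Δ(z)`, with `Δ` the Vandermonde determinant. The shift `z_i ↦ q z_i`,
`z_j ↦ z_j / q` preserves the lattice, and by quasi-periodicity of the kernel it exchanges
`α(u) = ∏ (1 - a_k u)` at `z_i` and `β(u) = ∏ (u - b_k)` at `z_j`. Hence the sum of
`kernel · det[w_k(z_i)]` vanishes for all polynomials `w_1, …, w_{n+1}` of degree at most `n + 1`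
among which are `α` and `β`. A linear functional `φ` on the polynomials of degree at most `n + 1`
which kills `α` and `β` is `p ↦ c det(p, w_1, …, w_{n+1})` for such `w_k`, and
`det[w_k(z_i)]` is proportional to `Δ(z) φ(∏_j (u - z_j))`. So
`∑ jacksonTerm · φ(∏_j (u - z_j)) = 0`.
Combining the constant coefficient, the leading coefficient and the value at the zero of
`1 - q a_j u` into such a functional, for the parameters with `q a_j` in place of `a_j`, gives the
`q`-difference equation

  `(1 - q A B) J(a, b) = (1 - q A ∏ x_k) ∏_k (1 - q a_j b_k) J(…, q a_j, …; b)`.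

Iterating it, with dominated convergence, sends `a_j` to `0`. Removing the `a_j` one by one, and
then the `b_j` by the reflection `z ↦ z⁻¹`, expresses `J(a, b)` by `J(0, 0)`. Finally, for
`a_i = 1 / x_i` and `b = 0` only the term `l = 0` survives, which yields the Macdonald identity
`J(0, 0) = (q)_∞ⁿ`.

All sums converge because `1 / thetaProd` splits on the lattice into Gaussian factors in the single
variables.
-/

open scoped BigOperators
open Finset

/-- The infinite q-Pochhammer symbol `(a)_∞ = ∏_{i=0}^∞ (1 - qⁱ a)`. -/
noncomputable def qp (q a : ℂ) : ℂ := ∏' i : ℕ, (1 - q ^ i * a)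

/-- The point `z = (x₁qᵛ¹,…,x_nqᵛⁿ, d z₁⁻¹⋯z_n⁻¹)` of the Gustafson lattice. -/
noncomputable def gz {n : ℕ} (q d : ℂ) (x : Fin n → ℂ) (ν : Fin n → ℤ) : Fin (n + 1) → ℂ :=
  Fin.snoc (fun k => x k * q ^ ν k) (d * (∏ k, x k * q ^ ν k)⁻¹)

/-- Summand of the regularized Jackson integral of Gustafson's `A_n` type. -/
noncomputable def gRegTerm {n : ℕ} (q d : ℂ) (a b : Fin (n + 1) → ℂ) (x : Fin n → ℂ)
    (ν : Fin n → ℤ) : ℂ :=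
  (∏ i, ∏ j, qp q (q * (a j)⁻¹ * gz q d x ν i) * qp q (q * (b j)⁻¹ * (gz q d x ν i)⁻¹)) /
    ∏ i, ∏ j ∈ Finset.Ioi i, qp q (q * gz q d x ν i / gz q d x ν j) *
      qp q (q * gz q d x ν j / gz q d x ν i)

/-- The regularized Jackson integral of Gustafson's `A_n` type `𝒦(x)`. -/
noncomputable def gReg {n : ℕ} (q d : ℂ) (a b : Fin (n + 1) → ℂ) (x : Fin n → ℂ) : ℂ :=
  (1 - q) ^ n * ∑' ν : Fin n → ℤ, gRegTerm q d a b x ν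

/-- Summand of the Macdonald-identity sum `𝒦₀(x)`. -/
noncomputable def g0Term {n : ℕ} (q d : ℂ) (x : Fin n → ℂ) (ν : Fin n → ℤ) : ℂ :=
  (∏ i, ∏ j ∈ Finset.Ioi i, qp q (q * gz q d x ν i / gz q d x ν j) *
      qp q (q * gz q d x ν j / gz q d x ν i))⁻¹

/-- The sum `𝒦₀(x)` of the Macdonald identity for `A_n⁽¹⁾`. -/
noncomputable def g0Sum {n : ℕ} (q d : ℂ) (x : Fin n → ℂ) : ℂ :=
  (1 - q) ^ n * ∑' ν : Fin n → ℤ, g0Term q d x ν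

namespace Gustafson

/-! ### The infinite q-Pochhammer symbol -/

section Pochhammer

open Filter Topology

variable {q : ℂ}

lemma summable_norm_pow_mul (hq1 : ‖q‖ < 1) (w : ℂ) : Summable fun i : ℕ => ‖-(q ^ i * w)‖ := by
  simp only [norm_neg, norm_mul, norm_pow]
  exact (summable_geometric_of_lt_one (norm_nonneg q) hq1).mul_right _

lemma multipliable_one_sub_pow_mul (hq1 : ‖q‖ < 1) (w : ℂ) :
    Multipliable fun i : ℕ => 1 - q ^ i * w := by
  simpa only [sub_eq_add_neg] using
    multipliable_one_add_of_summable (summable_norm_pow_mul hq1 w)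

lemma qp_eq_mul (hq1 : ‖q‖ < 1) (w : ℂ) : qp q w = (1 - w) * qp q (q * w) := by
  have h := multipliable_one_sub_pow_mul hq1 (q * w)
  unfold qp
  rw [tprod_eq_zero_mul']
  · simp only [pow_zero, one_mul, pow_succ, mul_assoc]
  · simpa only [pow_succ, mul_assoc] using h

lemma qp_zero (q : ℂ) : qp q 0 = 1 := by simp [qp]

lemma qp_one (hq1 : ‖q‖ < 1) : qp q 1 = 0 := by rw [qp_eq_mul hq1, sub_self, zero_mul]

lemma qp_ne_zero (hq1 : ‖q‖ < 1) {w : ℂ} (hw : ∀ i : ℕ, q ^ i * w ≠ 1) : qp q w ≠ 0 := by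
  have := tprod_one_add_ne_zero_of_summable (f := fun i : ℕ => -(q ^ i * w))
    (fun i hi => hw i (by linear_combination -hi)) (summable_norm_pow_mul hq1 w)
  simpa only [← sub_eq_add_neg, qp] using this

lemma qp_ne_zero_of_norm_lt_one (hq1 : ‖q‖ < 1) {w : ℂ} (hw : ‖w‖ < 1) : qp q w ≠ 0 := by
  refine qp_ne_zero hq1 fun i hi => ?_
  have h : ‖q‖ ^ i * ‖w‖ < 1 :=
    mul_lt_one_of_nonneg_of_lt_one_right (pow_le_one₀ (norm_nonneg q) hq1.le) (norm_nonneg w) hw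
  rw [← norm_pow, ← norm_mul, hi, norm_one] at h
  exact h.false

lemma qp_zpow_eq_zero (hq0 : q ≠ 0) (hq1 : ‖q‖ < 1) {m : ℤ} (hm : m ≤ 0) : qp q (q ^ m) = 0 := by
  obtain ⟨k, rfl⟩ := Int.exists_eq_neg_ofNat hm
  induction k with
  | zero => simpa using qp_one hq1
  | succ k ih =>
    rw [qp_eq_mul hq1, ← zpow_one_add₀ hq0, show (1 : ℤ) + -((k + 1 : ℕ) : ℤ) = -(k : ℤ) by
      push_cast; ring, ih (by omega), mul_zero]

lemma continuous_qp (hq1 : ‖q‖ < 1) : Continuous (qp q) := by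
  refine continuous_iff_continuousAt.2 fun w => ?_
  simp only [ContinuousAt, funext (qp.eq_1 q), sub_eq_add_neg]
  refine tendsto_tprod_one_add_of_dominated_convergence
    (bound := fun i => ‖q‖ ^ i * (‖w‖ + 1))
    ((summable_geometric_of_lt_one (norm_nonneg q) hq1).mul_right _)
    (fun i => (continuous_const.mul continuous_id).neg.tendsto w) ?_
  filter_upwards [continuous_norm.continuousAt.eventually_lt continuousAt_const (lt_add_one ‖w‖)]
    with u hu i
  rw [norm_neg, norm_mul, norm_pow]
  gcongr

lemma norm_qp_le (hq1 : ‖q‖ < 1) {w : ℂ} {t : ℝ} (hw : ‖w‖ ≤ t) :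
    ‖qp q w‖ ≤ ‖qp (‖q‖ : ℂ) (-(t : ℂ))‖ := by
  have h₁ := (multipliable_one_sub_pow_mul hq1 w).hasProd.tendsto_prod_nat.norm
  have h₂ := (multipliable_one_sub_pow_mul (q := (‖q‖ : ℂ)) (by simpa using hq1)
    (-(t : ℂ))).hasProd.tendsto_prod_nat.norm
  refine le_of_tendsto_of_tendsto' h₁ h₂ fun k => ?_
  rw [norm_prod, norm_prod]
  refine Finset.prod_le_prod (fun _ _ => norm_nonneg _) fun i _ => ?_
  have ht : 0 ≤ 1 + ‖q‖ ^ i * t := by have := (norm_nonneg w).trans hw; positivity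
  calc ‖1 - q ^ i * w‖ ≤ 1 + ‖q‖ ^ i * t := by
        refine (norm_sub_le _ _).trans ?_
        rw [norm_one, norm_mul, norm_pow]
        gcongr
    _ = ‖1 - (‖q‖ : ℂ) ^ i * (-(t : ℂ))‖ := by
        rw [mul_neg, sub_neg_eq_add, ← Complex.ofReal_pow, ← Complex.ofReal_mul,
          ← Complex.ofReal_one, ← Complex.ofReal_add, Complex.norm_real, Real.norm_of_nonneg ht]

end Pochhammer

/-! ### The root lattice -/

section LatticePoint

variable {ι : Type*}

/-- No quotient of two coordinates of `x` is an integral power of `q`. -/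
def QDistinct (q : ℂ) (x : ι → ℂ) : Prop :=
  ∀ i j, i ≠ j → ∀ m : ℤ, x i / x j ≠ q ^ m

/-- The point `(x_i q^{l_i})_i`. -/
noncomputable def latticePoint (q : ℂ) (x : ι → ℂ) (l : ι → ℤ) : ι → ℂ :=
  fun i => x i * q ^ l i

variable {q : ℂ} {x : ι → ℂ}

lemma latticePoint_zero (q : ℂ) (x : ι → ℂ) : latticePoint q x 0 = x := by
  ext i
  simp [latticePoint]

lemma latticePoint_ne_zero (hq0 : q ≠ 0) (hx : ∀ i, x i ≠ 0) (l : ι → ℤ) (i : ι) :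
    latticePoint q x l i ≠ 0 := mul_ne_zero (hx i) (zpow_ne_zero _ hq0)

lemma latticePoint_neg (q : ℂ) (x : ι → ℂ) (l : ι → ℤ) :
    latticePoint q x⁻¹ (-l) = (latticePoint q x l)⁻¹ := by
  ext i
  simp [latticePoint, mul_comm]

lemma latticePoint_injective (hq0 : q ≠ 0) (hx : ∀ i, x i ≠ 0) (hxq : QDistinct q x) (l : ι → ℤ) :
    Function.Injective (latticePoint q x l) := by
  intro i j hij
  by_contra hne
  refine hxq i j hne (l j - l i) ?_
  rwa [zpow_sub₀ hq0, div_eq_div_iff (hx j) (zpow_ne_zero _ hq0), mul_comm (q ^ l j)]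

lemma QDistinct.inv (hxq : QDistinct q x) : QDistinct q x⁻¹ := fun i j hij m h =>
  hxq i j hij (-m) <| by rw [zpow_neg, ← h, Pi.inv_apply, Pi.inv_apply, inv_div_inv, inv_div]

lemma latticePoint_add_single [DecidableEq ι] (hq0 : q ≠ 0) (x : ι → ℂ) (l : ι → ℤ) (k : ι) :
    latticePoint q x (l + Pi.single k 1) =
      Function.update (latticePoint q x l) k (q * latticePoint q x l k) := by
  ext i
  rcases eq_or_ne i k with rfl | hi
  · rw [Function.update_self, latticePoint, latticePoint, Pi.add_apply, Pi.single_eq_same,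
      zpow_add_one₀ hq0]
    ring
  · simp [latticePoint, hi]

end LatticePoint

section RootLattice

variable {ι : Type*} [Fintype ι]

/-- The root lattice of type `A`: the integer vectors with coordinate sum zero. -/
def rootLattice (ι : Type*) [Fintype ι] : AddSubgroup (ι → ℤ) where
  carrier := {l | ∑ i, l i = 0}
  add_mem' hl hm := by
    simp only [Set.mem_ofPred_eq, Pi.add_apply, sum_add_distrib] at hl hm ⊢
    rw [hl, hm, add_zero]
  zero_mem' := by simp
  neg_mem' hl := by
    simp only [Set.mem_ofPred_eq, Pi.neg_apply, sum_neg_distrib] at hl ⊢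
    rw [hl, neg_zero]

lemma mem_rootLattice {l : ι → ℤ} : l ∈ rootLattice ι ↔ ∑ i, l i = 0 := Iff.rfl

/-- The set `ℤⁿ` over which the Jackson integral is summed, as the root lattice of `A_n`: the last
coordinate is determined by the others. -/
def rootLatticeEquiv (n : ℕ) : (Fin n → ℤ) ≃ rootLattice (Fin (n + 1)) where
  toFun ν := ⟨Fin.snoc ν (-∑ i, ν i), by simp [mem_rootLattice, Fin.sum_univ_castSucc]⟩
  invFun l i := (l : Fin (n + 1) → ℤ) i.castSucc
  left_inv ν := by ext; simp
  right_inv l := by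
    have h := mem_rootLattice.1 l.2
    rw [Fin.sum_univ_castSucc] at h
    refine Subtype.ext (funext (Fin.lastCases ?_ fun i => ?_))
    · simpa using by linarith
    · simp

lemma prod_zpow_eq_zpow_sum {κ K : Type*} [CommGroupWithZero K] {c : K} (hc : c ≠ 0) (s : Finset κ)
    (l : κ → ℤ) : ∏ i ∈ s, c ^ l i = c ^ ∑ i ∈ s, l i := by
  induction s using Finset.cons_induction with
  | empty => simp
  | cons i s hi ih => rw [prod_cons, sum_cons, zpow_add₀ hc, ih]

lemma prod_latticePoint {q : ℂ} (hq0 : q ≠ 0) (x : ι → ℂ) (l : rootLattice ι) :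
    ∏ i, latticePoint q x l i = ∏ i, x i := by
  simp only [latticePoint, prod_mul_distrib, prod_zpow_eq_zpow_sum hq0, mem_rootLattice.1 l.2,
    zpow_zero, mul_one]

lemma eq_of_sum_eq_of_add_single [DecidableEq ι] {α : Type*} {G : (ι → ℤ) → α}
    (hG : ∀ i j (l : ι → ℤ), G (l + Pi.single i 1) = G (l + Pi.single j 1)) {l m : ι → ℤ}
    (h : ∑ i, l i = ∑ i, m i) : G l = G m := by
  cases isEmpty_or_nonempty ι
  · rw [Subsingleton.elim l m]
  let j := Classical.arbitrary ι
  have root_periodic (i : ι) :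
      Function.Periodic G (Pi.single i 1 - Pi.single j 1 : ι → ℤ) := fun k => by
    rw [add_sub_left_comm, add_comm, hG i j, sub_add_cancel]
  have decomposition : l - m = ∑ i, (l i - m i) • (Pi.single i 1 - Pi.single j 1 : ι → ℤ) := by
    simp only [smul_sub, sum_sub_distrib, ← sum_smul, h, sub_self, zero_smul, sub_zero]
    ext i
    simp [Finset.sum_apply, Pi.single_apply]
  have periodic : Function.Periodic G (l - m) := by
    rw [decomposition]
    exact sum_induction _ _ (fun _ _ => Function.Periodic.add_period) (fun k => by rw [add_zero])
      fun i _ => (root_periodic i).zsmul _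
  simpa using periodic m

end RootLattice

/-! ### The summand and its quasi-periodicity -/

section Summand

open Polynomial

variable {q : ℂ} {n : ℕ}

/-- The one-variable factor `∏_j (q a_j u)_∞ (q b_j / u)_∞` of the summand. Here and below the
parameters are the inverses of those in the statement, so that `0` is an admissible value. -/
noncomputable def weight {ι : Type*} [Fintype ι] (q : ℂ) (a b : ι → ℂ) (u : ℂ) : ℂ :=
  ∏ j, qp q (q * a j * u) * qp q (q * b j * u⁻¹)

/-- The denominator `∏_{i<j} (q z_i/z_j)_∞ (q z_j/z_i)_∞` of the summand. -/
noncomputable def weylDenom (q : ℂ) (z : Fin n → ℂ) : ℂ :=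
  ∏ i, ∏ j ∈ Ioi i, qp q (q * z i / z j) * qp q (q * z j / z i)

/-- The summand of the regularized Jackson integral. -/
noncomputable def jacksonTerm (q : ℂ) (a b z : Fin n → ℂ) : ℂ :=
  (∏ i, weight q a b (z i)) / weylDenom q z

/-- The regularized Jackson integral, without its factor `(1 - q)ⁿ`, as a sum over the root
lattice. -/
noncomputable def jacksonSum (q : ℂ) (a b x : Fin n → ℂ) : ℂ :=
  ∑' l : rootLattice (Fin n), jacksonTerm q a b (latticePoint q x l)

/-- The antisymmetric theta function `(y - x) (q x/y)_∞ (q y/x)_∞`. -/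
noncomputable def theta (q x y : ℂ) : ℂ := (y - x) * (qp q (q * x / y) * qp q (q * y / x))

/-- The product `∏_{i<j} θ(z_i, z_j)`. -/
noncomputable def thetaProd (q : ℂ) (z : Fin n → ℂ) : ℂ :=
  ∏ i, ∏ j ∈ Ioi i, theta q (z i) (z j)

/-- The quasi-periodic part of the summand, which differs from it by the Vandermonde
determinant. -/
noncomputable def kernel (q : ℂ) (a b z : Fin n → ℂ) : ℂ :=
  (∏ i, weight q a b (z i)) / thetaProd q z

/-- The polynomial `∏_j (1 - a_j u)`, the reversal of the nodal polynomial `∏_j (u - a_j)`. -/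
noncomputable def conodal {ι : Type*} [Fintype ι] (a : ι → ℂ) : ℂ[X] := ∏ j, (1 - C (a j) * X)

lemma eval_conodal {ι : Type*} [Fintype ι] (a : ι → ℂ) (u : ℂ) :
    (conodal a).eval u = ∏ j, (1 - a j * u) := by
  simp [conodal, eval_prod]

lemma theta_swap (q x y : ℂ) : theta q y x = -theta q x y := by
  unfold theta; ring

lemma theta_mul_left (hq0 : q ≠ 0) (hq1 : ‖q‖ < 1) {x y : ℂ} (hx : x ≠ 0) (hy : y ≠ 0) :
    theta q (q * x) y = -(y / x) * theta q x y := by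
  have h₁ : qp q (q * y / (q * x)) = (1 - y / x) * qp q (q * y / x) := by
    rw [mul_div_mul_left _ _ hq0, qp_eq_mul hq1, mul_div_assoc]
  have h₂ : qp q (q * x / y) = (1 - q * x / y) * qp q (q * (q * x) / y) := by
    rw [qp_eq_mul hq1, mul_div_assoc q (q * x)]
  rw [theta, theta, h₁, h₂]
  field_simp
  ring

lemma theta_mul_right (hq0 : q ≠ 0) (hq1 : ‖q‖ < 1) {x y : ℂ} (hx : x ≠ 0) (hy : y ≠ 0) :
    theta q x (q * y) = -(x / y) * theta q x y := by
  rw [← neg_inj, ← theta_swap, theta_mul_left hq0 hq1 hy hx, theta_swap q x y]; ring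

lemma thetaProd_eq (q : ℂ) (z : Fin n → ℂ) :
    thetaProd q z = (Matrix.vandermonde z).det * weylDenom q z := by
  simp only [thetaProd, weylDenom, theta, Matrix.det_vandermonde, prod_mul_distrib]

lemma jacksonTerm_eq_kernel_mul {a b z : Fin n → ℂ} (hz : Function.Injective z) :
    jacksonTerm q a b z = kernel q a b z * (Matrix.vandermonde z).det := by
  have h : (Matrix.vandermonde z).det ≠ 0 := Matrix.det_vandermonde_ne_zero_iff.2 hz
  rw [jacksonTerm, kernel, thetaProd_eq, div_mul_eq_mul_div, mul_comm (Matrix.vandermonde z).det,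
    mul_div_mul_right _ _ h]

lemma prod_Ioi_update {α M : Type*} [CommMonoid M] {f : α → α → M} {z : Fin n → α} {k : Fin n}
    {w : α} {g : Fin n → M} (hl : ∀ j ≠ k, f w (z j) = g j * f (z k) (z j))
    (hr : ∀ j ≠ k, f (z j) w = g j * f (z j) (z k)) :
    ∏ i, ∏ j ∈ Ioi i, f (Function.update z k w i) (Function.update z k w j) =
      (∏ j ∈ {k}ᶜ, g j) * ∏ i, ∏ j ∈ Ioi i, f (z i) (z j) := by
  have factor (i : Fin n) : ∀ j ∈ Ioi i,
      f (Function.update z k w i) (Function.update z k w j) =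
        ((if i = k then g j else 1) * (if j = k then g i else 1)) * f (z i) (z j) := by
    intro j hij
    have hij : i < j := mem_Ioi.1 hij
    rcases eq_or_ne i k with rfl | hi
    · simp [hij.ne', hl]
    rcases eq_or_ne j k with rfl | hj
    · simp [hi, hr]
    · simp [hi, hj]
  have collect : ∏ i, ∏ j ∈ Ioi i, ((if i = k then g j else 1) * (if j = k then g i else 1)) =
      ∏ j ∈ {k}ᶜ, g j := by
    simp only [prod_mul_distrib, prod_ite_eq', mem_Ioi]
    rw [← Ioi_disjUnion_Iio, prod_disjUnion, prod_eq_single k (fun i _ hi => by simp [hi])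
      (fun hk => (hk (mem_univ k)).elim), ← filter_gt_eq_Iio (a := k), prod_filter (· < k)]
    simp only [if_true]
  rw [← collect, ← prod_mul_distrib]
  refine prod_congr rfl fun i _ => ?_
  rw [← prod_mul_distrib]
  exact prod_congr rfl (factor i)

/-- Each variable `z_j` other than `z_k` contributes the factor `-z_j / z_k`. -/
lemma thetaProd_update (hq0 : q ≠ 0) (hq1 : ‖q‖ < 1) {z : Fin (n + 1) → ℂ} (hz : ∀ i, z i ≠ 0)
    (k : Fin (n + 1)) :
    thetaProd q (Function.update z k (q * z k)) * z k ^ (n + 1) =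
      (-1) ^ n * (∏ i, z i) * thetaProd q z := by
  have h : (∏ j ∈ {k}ᶜ, -(z j / z k)) * z k ^ (n + 1) = (-1) ^ n * ∏ i, z i := by
    have hk := hz k
    simp only [neg_eq_neg_one_mul (_ / _), prod_mul_distrib, prod_div_distrib, prod_const,
      card_compl, card_singleton, Fintype.card_fin, Nat.add_sub_cancel]
    rw [← prod_mul_prod_compl {k} z, prod_singleton, pow_succ]
    field_simp
  rw [thetaProd, prod_Ioi_update (fun j _ => theta_mul_left hq0 hq1 (hz k) (hz j))
    (fun j _ => theta_mul_right hq0 hq1 (hz j) (hz k)), mul_right_comm, h, thetaProd]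

lemma weight_mul {ι : Type*} [Fintype ι] (hq0 : q ≠ 0) (hq1 : ‖q‖ < 1) (a b : ι → ℂ) {u : ℂ}
    (hu : u ≠ 0) :
    weight q a b (q * u) * (conodal a).eval (q * u) * u ^ Fintype.card ι =
      weight q a b u * (Lagrange.nodal univ b).eval u := by
  rw [eval_conodal, Lagrange.eval_nodal, ← card_univ, ← prod_const, weight, weight,
    ← prod_mul_distrib, ← prod_mul_distrib, ← prod_mul_distrib]
  refine prod_congr rfl fun j _ => ?_
  have h₁ : qp q (q * a j * u) = (1 - a j * (q * u)) * qp q (q * a j * (q * u)) := by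
    rw [qp_eq_mul hq1]; ring_nf
  have h₂ : qp q (q * b j * (q * u)⁻¹) = (1 - b j * u⁻¹) * qp q (q * b j * u⁻¹) := by
    rw [show q * b j * (q * u)⁻¹ = b j * u⁻¹ by field_simp, qp_eq_mul hq1, mul_assoc q]
  rw [h₁, h₂]
  field_simp

lemma kernel_update (hq0 : q ≠ 0) (hq1 : ‖q‖ < 1) (a b : Fin (n + 1) → ℂ) {z : Fin (n + 1) → ℂ}
    (hz : ∀ i, z i ≠ 0) (k : Fin (n + 1)) :
    kernel q a b (Function.update z k (q * z k)) * (conodal a).eval (q * z k) *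
        ((-1) ^ n * ∏ i, z i) =
      kernel q a b z * (Lagrange.nodal univ b).eval (z k) := by
  have hc : (-1) ^ n * ∏ i, z i ≠ 0 :=
    mul_ne_zero (pow_ne_zero _ (by norm_num)) (prod_ne_zero_iff.2 fun i _ => hz i)
  have hzk := pow_ne_zero (n + 1) (hz k)
  have hθ : thetaProd q (Function.update z k (q * z k)) =
      (-1) ^ n * (∏ i, z i) * thetaProd q z / z k ^ (n + 1) :=
    eq_div_of_mul_eq hzk (thetaProd_update hq0 hq1 hz k)
  have hw := weight_mul hq0 hq1 a b (hz k)
  rw [Fintype.card_fin] at hw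
  rw [kernel, kernel, hθ, Fintype.prod_eq_mul_prod_compl k, Function.update_self,
    Fintype.prod_eq_mul_prod_compl k fun i => weight q a b (z i),
    prod_congr rfl fun i hi => by rw [Function.update_of_ne (by simpa using hi)],
    div_div_eq_mul_div, div_mul_eq_mul_div, div_mul_eq_mul_div, mul_comm _ (_ * ∏ i, z i),
    mul_div_mul_left _ _ hc, div_mul_eq_mul_div]
  congr 1
  linear_combination (∏ i ∈ {k}ᶜ, weight q a b (z i)) * hw

/-- The root `e_i - e_j`. -/
def root {ι : Type*} [Fintype ι] [DecidableEq ι] (i j : ι) : rootLattice ι :=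
  ⟨Pi.single i 1 - Pi.single j 1, by simp [mem_rootLattice]⟩

/-- Both `l` and `l + e_i - e_j` are reached from `l - e_j` by a unit step, and the multipliers of
the two steps agree up to the polynomial factors. -/
lemma kernel_add_root (hq0 : q ≠ 0) (hq1 : ‖q‖ < 1) (a b : Fin (n + 1) → ℂ)
    {x : Fin (n + 1) → ℂ} (hx : ∀ i, x i ≠ 0) (l : rootLattice (Fin (n + 1)))
    {i j : Fin (n + 1)} (hij : i ≠ j) {z z' : Fin (n + 1) → ℂ} (hz : latticePoint q x l = z)
    (hz' : latticePoint q x (l + root i j : rootLattice (Fin (n + 1))) = z') :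
    kernel q a b z' * (conodal a).eval (z' i) * (Lagrange.nodal univ b).eval (z' j) =
      kernel q a b z * (Lagrange.nodal univ b).eval (z i) * (conodal a).eval (z j) := by
  set y := latticePoint q x ((l : Fin (n + 1) → ℤ) - Pi.single j 1) with hy
  have hy0 : ∀ k, y k ≠ 0 := latticePoint_ne_zero hq0 hx _
  have hzy : z = Function.update y j (q * y j) := by
    rw [← hz, hy, ← latticePoint_add_single hq0, sub_add_cancel]
  have hzy' : z' = Function.update y i (q * y i) := by
    rw [← hz', hy, ← latticePoint_add_single hq0]
    congr 1
    simp only [root, AddSubgroup.coe_add]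
    abel
  have h_step_i := kernel_update hq0 hq1 a b hy0 i
  have h_step_j := kernel_update hq0 hq1 a b hy0 j
  rw [← hzy'] at h_step_i
  rw [← hzy] at h_step_j
  have hc : (-1) ^ n * ∏ k, y k ≠ 0 :=
    mul_ne_zero (pow_ne_zero _ (by norm_num)) (prod_ne_zero_iff.2 fun k _ => hy0 k)
  rw [show z' i = q * y i by simp [hzy'], show z' j = y j by simp [hzy', hij.symm],
    show z i = y i by simp [hzy, hij], show z j = q * y j by simp [hzy]]
  refine mul_right_cancel₀ hc ?_
  linear_combination (Lagrange.nodal univ b).eval (y j) * h_step_i -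
    (Lagrange.nodal univ b).eval (y i) * h_step_j

end Summand

/-! ### Summability -/

section Summability

open Filter Topology

variable {q : ℂ} {n : ℕ}

/-- The Gaussian factor compensating the quasi-periodicity of `thetaProd`. The power `c ^ l` drops
out of products over the root lattice and serves to balance the two ends of a sum over `l`. -/
noncomputable def gaussian (q c t : ℂ) (N : ℕ) (l : ℤ) : ℂ :=
  (c * t ^ N) ^ l * q ^ ((N : ℤ) * (l * (l - 1) / 2))

lemma gaussian_add_one {c t : ℂ} (hq0 : q ≠ 0) (hc : c ≠ 0) (ht : t ≠ 0) (N : ℕ) (l : ℤ) :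
    gaussian q c t N (l + 1) = gaussian q c t N l * (c * (t * q ^ l) ^ N) := by
  have h : (l + 1) * (l + 1 - 1) / 2 = l * (l - 1) / 2 + l := by
    rw [show (l + 1) * (l + 1 - 1) = l * (l - 1) + l * 2 by ring,
      Int.add_mul_ediv_right _ _ (by norm_num)]
  rw [gaussian, gaussian, h, zpow_add_one₀ (mul_ne_zero hc (pow_ne_zero _ ht)), mul_add,
    zpow_add₀ hq0, mul_pow, mul_comm (N : ℤ) l, zpow_mul q l (N : ℤ), zpow_natCast]
  ring

lemma gaussian_neg (hq0 : q ≠ 0) (c t : ℂ) (N : ℕ) (l : ℤ) :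
    gaussian q c t N (-l) = gaussian q (q ^ N * c⁻¹) t⁻¹ N l := by
  have h : -l * (-l - 1) / 2 = l + l * (l - 1) / 2 := by
    rw [show -l * (-l - 1) = l * 2 + l * (l - 1) by ring, Int.add_ediv_of_dvd_left ⟨l, by ring⟩,
      Int.mul_ediv_cancel _ (by norm_num)]
  rw [gaussian, gaussian, h, mul_add, zpow_add₀ hq0, zpow_neg, ← inv_zpow, zpow_mul, zpow_natCast,
    ← mul_assoc, ← mul_zpow]
  congr 2
  rw [inv_pow, mul_inv]
  ring

lemma pow_mul_gaussian (q c t : ℂ) (M N : ℕ) (l : ℤ) :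
    (t * q ^ l) ^ M * gaussian q c t N l = t ^ M * gaussian q (c * q ^ M) t N l := by
  have h : (q ^ M) ^ l = (q ^ l) ^ M := by
    rw [← zpow_natCast, ← zpow_natCast, ← zpow_mul, ← zpow_mul, mul_comm]
  rw [gaussian, gaussian, mul_right_comm c, mul_zpow _ (q ^ M), h, mul_pow]
  ring

lemma norm_gaussian (q c t : ℂ) (N : ℕ) (l : ℤ) :
    ‖gaussian q c t N l‖ = ‖gaussian (‖q‖ : ℂ) (‖c‖ : ℂ) (‖t‖ : ℂ) N l‖ := by
  simp [gaussian]

lemma gaussian_ne_zero {c t : ℂ} (hq0 : q ≠ 0) (hc : c ≠ 0) (ht : t ≠ 0) (N : ℕ) (l : ℤ) :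
    gaussian q c t N l ≠ 0 :=
  mul_ne_zero (zpow_ne_zero _ (mul_ne_zero hc (pow_ne_zero _ ht))) (zpow_ne_zero _ hq0)

lemma thetaProd_mul_prod_gaussian (hq0 : q ≠ 0) (hq1 : ‖q‖ < 1) {c : ℂ} (hc : c ≠ 0)
    {x : Fin (n + 1) → ℂ} (hx : ∀ i, x i ≠ 0) (l : rootLattice (Fin (n + 1))) :
    thetaProd q (latticePoint q x l) *
        ∏ i, gaussian q c (x i) (n + 1) ((l : Fin (n + 1) → ℤ) i) = thetaProd q x := by
  set G : (Fin (n + 1) → ℤ) → ℂ := fun l =>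
    thetaProd q (latticePoint q x l) * ∏ i, gaussian q c (x i) (n + 1) (l i) with hG
  have step (k : Fin (n + 1)) (l : Fin (n + 1) → ℤ) : G (l + Pi.single k 1) =
      c * ((-1) ^ n * ∏ i, latticePoint q x l i) * G l := by
    have hθ := thetaProd_update hq0 hq1 (latticePoint_ne_zero hq0 hx l) k
    have hg : ∏ i, gaussian q c (x i) (n + 1) ((l + Pi.single k 1 : Fin (n + 1) → ℤ) i) =
        (∏ i, gaussian q c (x i) (n + 1) (l i)) * (c * latticePoint q x l k ^ (n + 1)) := by
      refine (Fintype.prod_eq_mul_prod_compl k _).trans ?_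
      rw [Fintype.prod_eq_mul_prod_compl k fun i => gaussian q c (x i) (n + 1) (l i),
        Pi.add_apply, Pi.single_eq_same, gaussian_add_one hq0 hc (hx k), mul_right_comm]
      congr 2
      refine prod_congr rfl fun i hi => ?_
      rw [Pi.add_apply, Pi.single_eq_of_ne (by simpa using hi), add_zero]
    simp only [hG, latticePoint_add_single hq0, hg]
    linear_combination (c * ∏ i, gaussian q c (x i) (n + 1) (l i)) * hθ
  have h : G l = G 0 := eq_of_sum_eq_of_add_single (fun i j l => by rw [step, step])
    (by simpa using mem_rootLattice.1 l.2)
  simpa [hG, latticePoint_zero, gaussian] using h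

lemma weight_inv {ι : Type*} [Fintype ι] (q : ℂ) (a b : ι → ℂ) (u : ℂ) :
    weight q a b u⁻¹ = weight q b a u := by
  simp only [weight, inv_inv, mul_comm (qp q (q * a _ * u⁻¹))]

section OneVariable

variable {ι : Type*} [Fintype ι] {a b : ι → ℂ} {c t : ℂ}

lemma summable_nat_weight_mul_gaussian (hq0 : q ≠ 0) (hq1 : ‖q‖ < 1) (hc : c ≠ 0) (ht : t ≠ 0)
    (h : ‖c * ∏ j, b j‖ < 1) :
    Summable fun k : ℕ => weight q a b (t * q ^ k) * gaussian q c t (Fintype.card ι) k := by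
  let ρ : ℂ → ℂ := fun u => c * (Lagrange.nodal univ b).eval u / (conodal a).eval (q * u)
  have hα₀ : (conodal a).eval (q * 0) = 1 := by simp [eval_conodal]
  have hα : ContinuousAt (fun u : ℂ => (conodal a).eval (q * u)) 0 := by fun_prop
  have hρ : ContinuousAt ρ 0 :=
    ContinuousAt.div (by fun_prop) hα (by rw [hα₀]; exact one_ne_zero)
  have hρ₀ : ‖ρ 0‖ < 1 := by
    simpa [ρ, eval_conodal, Lagrange.eval_nodal, norm_prod] using h
  obtain ⟨r, hr, hr1⟩ := exists_between hρ₀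
  have hu : Tendsto (fun k : ℕ => t * q ^ k) atTop (𝓝 0) := by
    simpa using (tendsto_pow_atTop_nhds_zero_of_norm_lt_one hq1).const_mul t
  refine summable_of_ratio_norm_eventually_le hr1 ?_
  filter_upwards [hu.eventually (hρ.norm.eventually_lt continuousAt_const hr),
    hu.eventually (hα.eventually_ne (by rw [hα₀]; exact one_ne_zero))] with k hk hαk
  have hw := weight_mul hq0 hq1 a b (mul_ne_zero ht (pow_ne_zero k hq0))
  have ratio : weight q a b (t * q ^ (k + 1)) *
      gaussian q c t (Fintype.card ι) ((k + 1 : ℕ) : ℤ) =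
        ρ (t * q ^ k) * (weight q a b (t * q ^ k) * gaussian q c t (Fintype.card ι) k) := by
    rw [Nat.cast_succ, gaussian_add_one hq0 hc ht, zpow_natCast, pow_succ', mul_left_comm t,
      div_mul_eq_mul_div, eq_div_iff hαk]
    linear_combination c * gaussian q c t (Fintype.card ι) k * hw
  rw [ratio, norm_mul]
  gcongr

/-- The negative half of the sum is the positive half of the sum with `a` and `b` exchanged. -/
lemma summable_weight_mul_gaussian (hq0 : q ≠ 0) (hq1 : ‖q‖ < 1) (hc : c ≠ 0) (ht : t ≠ 0)
    (hb : ‖c * ∏ j, b j‖ < 1) (ha : ‖q ^ Fintype.card ι * ∏ j, a j‖ < ‖c‖) :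
    Summable fun l : ℤ => weight q a b (t * q ^ l) * gaussian q c t (Fintype.card ι) l := by
  have ha' : ‖q ^ Fintype.card ι * c⁻¹ * ∏ j, a j‖ < 1 := by
    rwa [mul_right_comm, norm_mul, norm_inv, ← div_eq_mul_inv, div_lt_one (norm_pos_iff.2 hc)]
  refine Summable.of_nat_of_neg
    (by simpa only [zpow_natCast] using summable_nat_weight_mul_gaussian hq0 hq1 hc ht hb)
    ((summable_nat_weight_mul_gaussian (a := b) hq0 hq1
      (mul_ne_zero (pow_ne_zero _ hq0) (inv_ne_zero hc)) (inv_ne_zero ht) ha').congr fun k => ?_)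
  rw [gaussian_neg hq0, ← weight_inv, mul_inv, inv_inv, zpow_neg, zpow_natCast]

lemma summable_one_add_pow_mul_weight_mul_gaussian (hq0 : q ≠ 0) (hq1 : ‖q‖ < 1) (hc : c ≠ 0)
    (ht : t ≠ 0) {M : ℕ} (hb : ‖c * ∏ j, b j‖ < 1)
    (ha : ‖q ^ Fintype.card ι * ∏ j, a j‖ < ‖c * q ^ M‖) :
    Summable fun l : ℤ => (1 + ‖t * q ^ l‖) ^ M *
      ‖weight q a b (t * q ^ l) * gaussian q c t (Fintype.card ι) l‖ := by
  have hqM : ‖q ^ M‖ ≤ 1 := by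
    rw [norm_pow]; exact pow_le_one₀ (norm_nonneg q) hq1.le
  have h₀ := summable_weight_mul_gaussian hq0 hq1 hc ht hb
    (ha.trans_le ((norm_mul_le _ _).trans (mul_le_of_le_one_right (norm_nonneg c) hqM)))
  have h₁ := summable_weight_mul_gaussian hq0 hq1 (mul_ne_zero hc (pow_ne_zero M hq0)) ht
    (by
      rw [mul_right_comm, norm_mul]
      exact mul_lt_one_of_nonneg_of_lt_one_left (norm_nonneg _) hb hqM) ha
  refine Summable.of_nonneg_of_le (fun l => by positivity) (fun l => ?_)
    ((h₀.norm.add (h₁.norm.mul_left (‖t‖ ^ M))).mul_left (2 ^ (M - 1)))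
  have h := add_pow_le zero_le_one (norm_nonneg (t * q ^ l)) M
  rw [one_pow, ← norm_pow] at h
  calc (1 + ‖t * q ^ l‖) ^ M * ‖weight q a b (t * q ^ l) * gaussian q c t (Fintype.card ι) l‖
      ≤ 2 ^ (M - 1) * (1 + ‖(t * q ^ l) ^ M‖) *
          ‖weight q a b (t * q ^ l) * gaussian q c t (Fintype.card ι) l‖ := by gcongr
    _ = _ := by
        rw [mul_assoc, one_add_mul, ← norm_mul, mul_left_comm (_ ^ M), pow_mul_gaussian,
          mul_left_comm, norm_mul (t ^ M), norm_pow]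

end OneVariable

lemma summable_prod_pi {α : Type*} :
    ∀ (m : ℕ) {g : Fin m → α → ℝ}, (∀ i l, 0 ≤ g i l) → (∀ i, Summable (g i)) →
      Summable fun l : Fin m → α => ∏ i, g i (l i)
  | 0, _, _, _ => (hasSum_fintype _).summable
  | m + 1, g, hg, hs => by
    have ih := summable_prod_pi m (fun i => hg i.succ) fun i => hs i.succ
    rw [← (Fin.consEquiv fun _ : Fin (m + 1) => α).summable_iff]
    refine ((hs 0).mul_of_nonneg ih (hg 0) fun l => prod_nonneg fun i _ => hg _ _).congr
      fun p => ?_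
    simp [Fin.prod_univ_succ, Fin.consEquiv]

lemma exists_pos_mul_lt_one_and_lt_mul {A B r : ℝ} (hA : 0 ≤ A) (hB : 0 ≤ B) (hr : 0 < r)
    (h : A * B < r) : ∃ c : ℝ, 0 < c ∧ c * B < 1 ∧ A < c * r := by
  rcases hB.eq_or_lt with rfl | hB
  · refine ⟨A / r + 1, by positivity, by simp, ?_⟩
    rw [add_one_mul, div_mul_cancel₀ _ hr.ne']
    exact lt_add_of_pos_right A hr
  · obtain ⟨c, hcA, hcB⟩ := exists_between (show A / r < 1 / B by
      rwa [div_lt_div_iff₀ hr hB, one_mul])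
    exact ⟨c, (div_nonneg hA hr.le).trans_lt hcA, (lt_div_iff₀ hB).1 hcB, (div_lt_iff₀ hr).1 hcA⟩

/-- A majorant of `|weight q a b u|` depending only on the absolute values of its arguments and
monotone in those of `a` and `b`. -/
noncomputable def weightMajorant {ι : Type*} [Fintype ι] (q : ℂ) (a b : ι → ℂ) (u : ℂ) : ℝ :=
  ‖weight (‖q‖ : ℂ) (fun j => -(‖a j‖ : ℂ)) (fun j => -(‖b j‖ : ℂ)) (‖u‖ : ℂ)‖

lemma norm_weight_le {ι : Type*} [Fintype ι] (hq1 : ‖q‖ < 1) {a b a' b' : ι → ℂ}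
    (ha : ∀ j, ‖a j‖ ≤ ‖a' j‖) (hb : ∀ j, ‖b j‖ ≤ ‖b' j‖) (u : ℂ) :
    ‖weight q a b u‖ ≤ weightMajorant q a' b' u := by
  have bound {s s' : ℂ} (hs : ‖s‖ ≤ ‖s'‖) (v : ℂ) :
      ‖qp q (q * s * v)‖ ≤ ‖qp (‖q‖ : ℂ) (‖q‖ * -(‖s'‖ : ℂ) * ‖v‖)‖ := by
    refine (norm_qp_le hq1 (t := ‖q‖ * ‖s'‖ * ‖v‖) ?_).trans_eq (by push_cast; ring_nf)
    rw [norm_mul, norm_mul]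
    gcongr
  rw [weightMajorant, weight, weight, norm_prod, norm_prod]
  refine prod_le_prod (fun _ _ => norm_nonneg _) fun j _ => ?_
  rw [norm_mul, norm_mul, ← Complex.ofReal_inv, ← norm_inv]
  exact mul_le_mul (bound (ha j) u) (bound (hb j) u⁻¹) (norm_nonneg _) (norm_nonneg _)

/-- A majorant of the kernel times a function of degree at most `M` in each variable. -/
noncomputable def kernelMajorant (q : ℂ) (M : ℕ) (a b z : Fin n → ℂ) : ℝ :=
  (∏ i, (1 + ‖z i‖) ^ M * weightMajorant q a b (z i)) * ‖thetaProd q z‖⁻¹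

lemma norm_kernel_mul_le (hq1 : ‖q‖ < 1) {a b a' b' : Fin n → ℂ} (ha : ∀ j, ‖a j‖ ≤ ‖a' j‖)
    (hb : ∀ j, ‖b j‖ ≤ ‖b' j‖) {M : ℕ} {z : Fin n → ℂ} {y : ℂ} {C : ℝ}
    (hy : ‖y‖ ≤ C * ∏ i, (1 + ‖z i‖) ^ M) :
    ‖kernel q a b z * y‖ ≤ C * kernelMajorant q M a' b' z := by
  have h : ∏ i, ‖weight q a b (z i)‖ ≤ ∏ i, weightMajorant q a' b' (z i) :=
    prod_le_prod (fun _ _ => norm_nonneg _) fun i _ => norm_weight_le hq1 ha hb _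
  have h₀ : 0 ≤ ∏ i, weightMajorant q a' b' (z i) := prod_nonneg fun _ _ => norm_nonneg _
  rw [norm_mul, kernel, norm_div, norm_prod, div_eq_mul_inv]
  calc _ ≤ (∏ i, weightMajorant q a' b' (z i)) * ‖thetaProd q z‖⁻¹ *
        (C * ∏ i, (1 + ‖z i‖) ^ M) := by gcongr
    _ = _ := by rw [kernelMajorant, prod_mul_distrib]; ring

/-- The balancing condition makes room for a constant `c` with which the Gaussian factors, into
which `1 / thetaProd` splits on the lattice, bring every one-variable sum to convergence. -/
lemma summable_kernelMajorant (hq0 : q ≠ 0) (hq1 : ‖q‖ < 1) (M : ℕ) {a b x : Fin (n + 1) → ℂ}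
    (hx : ∀ i, x i ≠ 0) (h : ‖q‖ ^ (n + 1) * ‖∏ j, a j‖ * ‖∏ j, b j‖ < ‖q‖ ^ M) :
    Summable fun l : rootLattice (Fin (n + 1)) => kernelMajorant q M a b (latticePoint q x l) := by
  obtain ⟨c, hc, hcb, hca⟩ := exists_pos_mul_lt_one_and_lt_mul
    (by positivity) (norm_nonneg (∏ j, b j)) (pow_pos (norm_pos_iff.2 hq0) M) h
  have hc' : (c : ℂ) ≠ 0 := by exact_mod_cast hc.ne'
  let g (i : Fin (n + 1)) (l : ℤ) : ℝ := (1 + ‖x i * q ^ l‖) ^ M *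
    (weightMajorant q a b (x i * q ^ l) * ‖gaussian q c (x i) (n + 1) l‖)
  have hg (i : Fin (n + 1)) : Summable (g i) := by
    refine (summable_one_add_pow_mul_weight_mul_gaussian (q := (‖q‖ : ℂ)) (c := c)
      (t := (‖x i‖ : ℂ)) (a := fun j => -(‖a j‖ : ℂ)) (b := fun j => -(‖b j‖ : ℂ)) (M := M)
      (by simpa using hq0) (by simpa using hq1) hc' (by simpa using hx i) ?_ ?_).congr fun l => ?_
    · simpa [norm_prod, abs_of_pos hc] using hcb
    · simpa [norm_prod, abs_of_pos hc] using hca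
    · simp [g, weightMajorant, norm_gaussian q, abs_of_pos hc]
  have hs := (summable_prod_pi _ (fun i l => mul_nonneg (by positivity)
    (mul_nonneg (norm_nonneg _) (norm_nonneg _))) hg).comp_injective
    (Subtype.val_injective (p := (· ∈ rootLattice (Fin (n + 1)))))
  refine (hs.mul_left ‖thetaProd q x‖⁻¹).congr fun l => ?_
  have hG : ∏ i, ‖gaussian q c (x i) (n + 1) ((l : Fin (n + 1) → ℤ) i)‖ ≠ 0 :=
    prod_ne_zero_iff.2 fun i _ => norm_ne_zero_iff.2 (gaussian_ne_zero hq0 hc' (hx i) _ _)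
  rw [← thetaProd_mul_prod_gaussian hq0 hq1 hc' hx l, norm_mul, norm_prod]
  simp only [Function.comp_apply, kernelMajorant, weightMajorant, latticePoint, prod_mul_distrib]
  field_simp

lemma norm_vandermonde_det_le (z : Fin (n + 1) → ℂ) :
    ‖(Matrix.vandermonde z).det‖ ≤ ∏ i, (1 + ‖z i‖) ^ n := by
  have h (i : Fin (n + 1)) : ‖∏ j ∈ Ioi i, (z j - z i)‖ ≤
      ∏ j ∈ Ioi i, ((1 + ‖z i‖) * (1 + ‖z j‖)) := by
    rw [norm_prod]
    refine prod_le_prod (fun _ _ => norm_nonneg _) fun j _ => (norm_sub_le _ _).trans ?_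
    nlinarith [norm_nonneg (z i), norm_nonneg (z j),
      mul_nonneg (norm_nonneg (z i)) (norm_nonneg (z j))]
  rw [Matrix.det_vandermonde, norm_prod]
  refine (prod_le_prod (fun _ _ => norm_nonneg _) fun i _ => h i).trans_eq ?_
  rw [prod_prod_Ioi_mul_eq_prod_prod_off_diag fun _ i => 1 + ‖z i‖]
  simp [card_compl]

end Summability

/-! ### Linear functionals as determinants -/

section Functional

open Polynomial

section Dual

variable {K V : Type*} [Field K] [AddCommGroup V] [Module K V] {m : ℕ} {φ : Module.Dual K V}

lemma exists_linearIndependent_span_eq_ker (hV : Module.finrank K V = m + 1)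
    (hφ : φ ≠ 0) {s : Set V} (hs : LinearIndepOn K id s) (hsφ : s ⊆ LinearMap.ker φ) :
    ∃ w : Fin m → V, LinearIndependent K w ∧
      Submodule.span K (Set.range w) = LinearMap.ker φ ∧ s ⊆ Set.range w := by
  have : FiniteDimensional K V := .of_finrank_eq_succ hV
  have hB := hs.linearIndepOn_extend hsφ
  have hspan : Submodule.span K (hs.extend hsφ) = LinearMap.ker φ := by
    rw [hs.span_extend_eq_span hsφ, Submodule.span_eq]
  have : Fintype (hs.extend hsφ) := @Fintype.ofFinite _ hB.linearIndependent.finite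
  have hcard : Fintype.card (hs.extend hsφ) = m := by
    have h := Module.Dual.finrank_ker_add_one_of_ne_zero hφ
    rw [← hspan, finrank_span_set_eq_card hB, Set.toFinset_card, hV] at h
    exact Nat.succ_injective h
  let r := (Fintype.equivFinOfCardEq hcard).symm
  have hw : Set.range (Subtype.val ∘ r) = hs.extend hsφ := by
    rw [r.surjective.range_comp, Subtype.range_coe]
  exact ⟨Subtype.val ∘ r, hB.linearIndependent.comp r r.injective, by rw [hw, hspan],
    hw.symm ▸ hs.subset_extend hsφ⟩

lemma exists_eq_mul_det_cons (e : Module.Basis (Fin (m + 1)) K V) {w : Fin m → V}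
    (hw : LinearIndependent K w) (hspan : Submodule.span K (Set.range w) = LinearMap.ker φ) :
    ∃ c : K, ∀ p, φ p = c * e.det (Fin.cons p w : Fin (m + 1) → V) := by
  have : FiniteDimensional K V := e.finiteDimensional_of_finite
  let D : Module.Dual K V := e.det.toMultilinearMap.toLinearMap (Fin.cons 0 w) 0
  have hD (p : V) : D p = e.det (Fin.cons p w : Fin (m + 1) → V) := by
    simp [D, Fin.update_cons_zero]
  have ker_le : ⨅ _ : Unit, LinearMap.ker D ≤ LinearMap.ker φ := fun p hp => by
    simp only [ciInf_const, LinearMap.mem_ker] at hp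
    by_contra hpφ
    have hli : LinearIndependent K (Fin.cons p w : Fin (m + 1) → V) :=
      linearIndependent_finCons.2 ⟨hw, by rwa [hspan]⟩
    exact (e.is_basis_iff_det.1 ⟨hli, hli.span_eq_top_of_card_eq_finrank'
      (Module.finrank_eq_card_basis e).symm⟩).ne_zero ((hD p).symm.trans hp)
  have hmem := mem_span_of_iInf_ker_le_ker ker_le
  rw [Set.range_const, Submodule.mem_span_singleton] at hmem
  obtain ⟨c, hc⟩ := hmem
  exact ⟨c, fun p => by rw [← hc, LinearMap.smul_apply, hD, smul_eq_mul]⟩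

end Dual

lemma nodal_mem_degreeLT {R : Type*} [CommRing R] [Nontrivial R] {m : ℕ} (z : Fin m → R) :
    Lagrange.nodal univ z ∈ degreeLT R (m + 1) := by
  rw [mem_degreeLT, Lagrange.degree_nodal, card_univ, Fintype.card_fin]
  exact_mod_cast m.lt_succ_self

lemma coeff_nodal_card {R ι : Type*} [CommRing R] [Nontrivial R] [Fintype ι] (z : ι → R) :
    (Lagrange.nodal univ z).coeff (Fintype.card ι) = 1 := by
  simpa using (Lagrange.nodal_monic (s := univ) (v := z)).coeff_natDegree

/-- Multiply the coefficient matrix by the Vandermonde matrix, completed by the row which reads off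
the leading coefficient. -/
lemma det_eval_eq {R : Type*} [CommRing R] [Nontrivial R] {m : ℕ} (z : Fin m → R)
    (w : Fin m → degreeLT R (m + 1)) :
    (Matrix.of fun i k => (w k : R[X]).eval (z i)).det =
      (-1) ^ m * (Matrix.vandermonde z).det *
        (degreeLT.basis R (m + 1)).det (Fin.cons ⟨Lagrange.nodal univ z, nodal_mem_degreeLT z⟩ w :
          Fin (m + 1) → degreeLT R (m + 1)) := by
  set p : Fin (m + 1) → degreeLT R (m + 1) :=
    Fin.cons ⟨Lagrange.nodal univ z, nodal_mem_degreeLT z⟩ w with hp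
  let N : Matrix (Fin (m + 1)) (Fin (m + 1)) R :=
    Matrix.of (Fin.snoc (fun i k => z i ^ (k : ℕ)) (Pi.single (Fin.last m) 1))
  have hN : N.det = (Matrix.vandermonde z).det := by
    have hminor : N.submatrix Fin.castSucc Fin.castSucc = Matrix.vandermonde z := by
      ext i k
      simp [N, Matrix.vandermonde_apply]
    rw [Matrix.det_succ_row N (Fin.last m), Fin.sum_univ_castSucc, ← hminor]
    simp [N]
  have hNp : N * (degreeLT.basis R (m + 1)).toMatrix p =
      Matrix.of (Fin.snoc (fun i k => (p k : R[X]).eval (z i)) fun k => (p k : R[X]).coeff m) := by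
    ext i k
    simp only [Matrix.mul_apply, Module.Basis.toMatrix_apply, degreeLT.basis_repr, N,
      Matrix.of_apply]
    refine Fin.lastCases ?_ (fun i => ?_) i
    · simp [Pi.single_apply]
    · simp only [Fin.snoc_castSucc, eval_eq_sum_degreeLTEquiv (p k).2]
      exact sum_congr rfl fun _ _ => mul_comm _ _
  have hcoeff : (Lagrange.nodal univ z).coeff m = 1 := by simpa using coeff_nodal_card z
  have hdet : (N * (degreeLT.basis R (m + 1)).toMatrix p).det =
      (-1) ^ m * (Matrix.of fun i k => (w k : R[X]).eval (z i)).det := by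
    have hminor : (Matrix.of (Fin.snoc (fun i k => (p k : R[X]).eval (z i))
        fun k => (p k : R[X]).coeff m)).submatrix Fin.castSucc Fin.succ =
          Matrix.of fun i k => (w k : R[X]).eval (z i) := by
      ext i k
      simp [hp]
    rw [hNp, Matrix.det_succ_column_zero, Fin.sum_univ_castSucc, ← hminor]
    simp [hp, Lagrange.eval_nodal_at_node, hcoeff]
  rw [mul_assoc, Module.Basis.det_apply, ← hN, ← Matrix.det_mul, hdet, ← mul_assoc, ← mul_pow]
  simp

/-- Extend the given polynomials to a basis `w` of the kernel of `φ` on the polynomials of degree at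
most `m`, on which `φ` is then a multiple of `p ↦ det (p, w₁, …, w_m)`. -/
lemma exists_dual_nodal_mul_det_vandermonde_eq {K ι : Type*} [Field K] {m : ℕ}
    {φ : Module.Dual K K[X]} (hφ : φ.domRestrict (degreeLT K (m + 1)) ≠ 0) {v : ι → K[X]}
    (hv : LinearIndependent K v) (hvm : ∀ i, v i ∈ degreeLT K (m + 1)) (hvφ : ∀ i, φ (v i) = 0) :
    ∃ (c : K) (w : Fin m → K[X]), (∀ k, (w k).natDegree ≤ m) ∧ (∀ i, v i ∈ Set.range w) ∧
      ∀ z : Fin m → K, φ (Lagrange.nodal univ z) * (Matrix.vandermonde z).det =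
        c * (Matrix.of fun i k => (w k).eval (z i)).det := by
  let e := degreeLT.basis K (m + 1)
  let v' (i : ι) : degreeLT K (m + 1) := ⟨v i, hvm i⟩
  have hv' : LinearIndependent K v' := .of_comp (degreeLT K (m + 1)).subtype hv
  obtain ⟨w, hw, hspan, hsub⟩ := exists_linearIndependent_span_eq_ker
    ((Module.finrank_eq_card_basis e).trans (Fintype.card_fin _)) hφ hv'.linearIndepOn_id
    (by rintro _ ⟨i, rfl⟩; exact hvφ i)
  obtain ⟨c, hc⟩ := exists_eq_mul_det_cons e hw hspan
  refine ⟨c * (-1) ^ m, fun k => w k, fun k => ?_, fun i => ?_, fun z => ?_⟩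
  · exact natDegree_le_iff_degree_le.2 (Order.le_of_lt_succ (mem_degreeLT.1 (w k).2))
  · obtain ⟨k, hk⟩ := hsub ⟨i, rfl⟩
    exact ⟨k, congrArg Subtype.val hk⟩
  · have hcz := hc ⟨Lagrange.nodal univ z, nodal_mem_degreeLT z⟩
    have hsign : ((-1 : K) ^ m) * (-1) ^ m = 1 := by rw [← mul_pow]; simp
    rw [LinearMap.domRestrict_apply] at hcz
    rw [hcz, det_eval_eq, mul_assoc c ((-1) ^ m), mul_assoc ((-1) ^ m) (Matrix.det _),
      ← mul_assoc ((-1) ^ m) ((-1) ^ m), hsign, one_mul, mul_assoc,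
      mul_comm (Matrix.vandermonde z).det]

end Functional

/-! ### Relations between the sums -/

section Relation

open Polynomial

variable {q : ℂ} {n : ℕ}

lemma exists_norm_eval_le {p : ℂ[X]} {M : ℕ} (hp : p.natDegree ≤ M) :
    ∃ C : ℝ, ∀ u : ℂ, ‖p.eval u‖ ≤ C * (1 + ‖u‖) ^ M := by
  refine ⟨∑ i ∈ range (M + 1), ‖p.coeff i‖, fun u => ?_⟩
  rw [eval_eq_sum_range' (Nat.lt_succ_of_le hp), sum_mul]
  refine norm_sum_le_of_le _ fun i hi => ?_
  rw [norm_mul, norm_pow]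
  gcongr
  calc ‖u‖ ^ i ≤ (1 + ‖u‖) ^ i := by gcongr; exact le_add_of_nonneg_left zero_le_one
    _ ≤ (1 + ‖u‖) ^ M := by
      gcongr
      · exact le_add_of_nonneg_right (norm_nonneg u)
      · exact Nat.le_of_lt_succ (mem_range.1 hi)

lemma natDegree_conodal_le {ι : Type*} [Fintype ι] (a : ι → ℂ) :
    (conodal a).natDegree ≤ Fintype.card ι :=
  (natDegree_prod_le _ _).trans <| (sum_le_card_nsmul _ _ 1 fun j _ => by compute_degree).trans
    (by simp)

lemma summable_kernel_mul_prod_eval (hq0 : q ≠ 0) (hq1 : ‖q‖ < 1) {a b x : Fin (n + 1) → ℂ}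
    (hx : ∀ i, x i ≠ 0) {M : ℕ} (h : ‖q‖ ^ (n + 1) * ‖∏ j, a j‖ * ‖∏ j, b j‖ < ‖q‖ ^ M)
    {w : Fin (n + 1) → ℂ[X]} (hw : ∀ k, (w k).natDegree ≤ M) (σ : Equiv.Perm (Fin (n + 1))) :
    Summable fun l : rootLattice (Fin (n + 1)) => kernel q a b (latticePoint q x l) *
      ∏ k, (w k).eval (latticePoint q x l (σ k)) := by
  choose C hC using fun k => exists_norm_eval_le (hw k)
  refine .of_norm_bounded ((summable_kernelMajorant hq0 hq1 M hx h).mul_left (∏ k, C k))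
    fun l => norm_kernel_mul_le hq1 (fun _ => le_rfl) (fun _ => le_rfl) ?_
  rw [norm_prod, ← Equiv.prod_comp σ fun i => (1 + ‖latticePoint q x l i‖) ^ M,
    ← prod_mul_distrib]
  exact prod_le_prod (fun _ _ => norm_nonneg _) fun k _ => hC k _

lemma latticePoint_add_root_of_ne {ι : Type*} [Fintype ι] [DecidableEq ι] (q : ℂ) (x : ι → ℂ)
    (l : rootLattice ι) {i j k : ι} (hi : k ≠ i) (hj : k ≠ j) :
    latticePoint q x (l + root i j : rootLattice ι) k = latticePoint q x l k := by
  simp [latticePoint, root, hi, hj]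

/-- The shift by the root `e_{σ s} - e_{σ t}` exchanges `conodal a` and `nodal b`. -/
lemma tsum_kernel_mul_prod_eval_mul_swap (hq0 : q ≠ 0) (hq1 : ‖q‖ < 1) {a b x : Fin (n + 1) → ℂ}
    (hx : ∀ i, x i ≠ 0) {w : Fin (n + 1) → ℂ[X]} {s t : Fin (n + 1)} (hst : s ≠ t)
    (hs : w s = conodal a) (ht : w t = Lagrange.nodal univ b) (σ : Equiv.Perm (Fin (n + 1))) :
    ∑' l : rootLattice (Fin (n + 1)), kernel q a b (latticePoint q x l) *
        ∏ k, (w k).eval (latticePoint q x l ((σ * Equiv.swap s t) k)) =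
      ∑' l : rootLattice (Fin (n + 1)), kernel q a b (latticePoint q x l) *
        ∏ k, (w k).eval (latticePoint q x l (σ k)) := by
  rw [eq_comm, ← Equiv.tsum_eq (Equiv.addRight (root (σ s) (σ t)))]
  refine tsum_congr fun l => ?_
  have hshift := kernel_add_root hq0 hq1 a b hx l (σ.injective.ne hst) rfl rfl
  have split (f : Fin (n + 1) → ℂ) : ∏ k, f k = f s * f t * ∏ k ∈ {s, t}ᶜ, f k := by
    rw [← prod_mul_prod_compl {s, t}, prod_pair hst]
  have hrest (k) (hk : k ∈ ({s, t} : Finset (Fin (n + 1)))ᶜ) :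
      (w k).eval (latticePoint q x (l + root (σ s) (σ t) : rootLattice (Fin (n + 1))) (σ k)) =
        (w k).eval (latticePoint q x l ((σ * Equiv.swap s t) k)) := by
    obtain ⟨hks, hkt⟩ : k ≠ s ∧ k ≠ t := by simpa using hk
    rw [latticePoint_add_root_of_ne q x l (σ.injective.ne hks) (σ.injective.ne hkt),
      Equiv.Perm.mul_apply, Equiv.swap_apply_of_ne_of_ne hks hkt]
  simp only [Equiv.coe_addRight]
  rw [split, split, prod_congr rfl hrest, hs, ht, Equiv.Perm.mul_apply,
    Equiv.Perm.mul_apply, Equiv.swap_apply_left, Equiv.swap_apply_right]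
  linear_combination (∏ k ∈ {s, t}ᶜ, (w k).eval (latticePoint q x l ((σ * Equiv.swap s t) k))) *
    hshift

lemma tsum_kernel_mul_det_eq_zero (hq0 : q ≠ 0) (hq1 : ‖q‖ < 1) {a b x : Fin (n + 1) → ℂ}
    (hx : ∀ i, x i ≠ 0) (h : ‖∏ j, a j‖ * ‖∏ j, b j‖ < 1) {w : Fin (n + 1) → ℂ[X]}
    (hw : ∀ k, (w k).natDegree ≤ n + 1) (ha : conodal a ∈ Set.range w)
    (hb : Lagrange.nodal univ b ∈ Set.range w) (hab : conodal a ≠ Lagrange.nodal univ b) :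
    ∑' l : rootLattice (Fin (n + 1)), kernel q a b (latticePoint q x l) *
      (Matrix.of fun i k => (w k).eval (latticePoint q x l i)).det = 0 := by
  obtain ⟨s, hs⟩ := ha
  obtain ⟨t, ht⟩ := hb
  have hst : s ≠ t := fun hst => hab (hs.symm.trans (hst ▸ ht))
  have hM : ‖q‖ ^ (n + 1) * ‖∏ j, a j‖ * ‖∏ j, b j‖ < ‖q‖ ^ (n + 1) := by
    rw [mul_assoc]
    exact mul_lt_of_lt_one_right (pow_pos (norm_pos_iff.2 hq0) _) h
  set T : Equiv.Perm (Fin (n + 1)) → ℂ := fun σ =>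
    ∑' l : rootLattice (Fin (n + 1)), kernel q a b (latticePoint q x l) *
      ∏ k, (w k).eval (latticePoint q x l (σ k)) with hT
  have expand : ∑' l : rootLattice (Fin (n + 1)), kernel q a b (latticePoint q x l) *
      (Matrix.of fun i k => (w k).eval (latticePoint q x l i)).det =
        ∑ σ : Equiv.Perm (Fin (n + 1)), (Equiv.Perm.sign σ : ℂ) * T σ := by
    simp only [Matrix.det_apply', Matrix.of_apply, mul_sum, hT, ← tsum_mul_left,
      mul_left_comm (kernel _ _ _ _)]
    exact Summable.tsum_finsetSum fun σ _ =>
      (summable_kernel_mul_prod_eval hq0 hq1 hx hM hw σ).mul_left _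
  rw [expand, ← self_eq_neg, ← sum_neg_distrib,
    ← Equiv.sum_comp (Equiv.mulRight (Equiv.swap s t))]
  refine sum_congr rfl fun σ _ => ?_
  have hswap : T (σ * Equiv.swap s t) = T σ :=
    tsum_kernel_mul_prod_eval_mul_swap hq0 hq1 hx hst hs ht σ
  simp [hswap, Equiv.Perm.sign_mul, Equiv.Perm.sign_swap hst]

end Relation

section Shift

open Polynomial

lemma coeff_conodal_card {ι : Type*} [Fintype ι] (a : ι → ℂ) :
    (conodal a).coeff (Fintype.card ι) = (-1) ^ Fintype.card ι * ∏ j, a j := by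
  have h := coeff_prod_of_natDegree_le univ (fun j => 1 - C (a j) * X) 1 fun j _ => by
    compute_degree
  rw [mul_one, card_univ] at h
  rw [conodal, h, ← card_univ, ← prod_const, ← prod_mul_distrib]
  exact prod_congr rfl fun j _ => by simp [coeff_one]

lemma eval_nodal_zero {ι : Type*} [Fintype ι] (z : ι → ℂ) :
    (Lagrange.nodal univ z).eval 0 = (-1) ^ Fintype.card ι * ∏ j, z j := by
  simp [Lagrange.eval_nodal, prod_neg]

/-- Compare constant and leading coefficients. -/
lemma linearIndependent_conodal_nodal {ι : Type*} [Fintype ι] {a b : ι → ℂ}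
    (h : (∏ j, a j) * ∏ j, b j ≠ 1) :
    LinearIndependent ℂ ![conodal a, Lagrange.nodal univ b] := by
  refine LinearIndependent.pair_iff.2 fun s t hst => ?_
  have h_const := congrArg (eval 0) hst
  have h_lead := congrArg (coeff · (Fintype.card ι)) hst
  simp only [eval_add, eval_smul, eval_conodal, mul_zero, sub_zero, prod_const_one,
    eval_nodal_zero, eval_zero, smul_eq_mul, mul_one] at h_const
  simp only [coeff_add, coeff_smul, coeff_conodal_card, coeff_nodal_card, coeff_zero, smul_eq_mul,
    mul_one] at h_lead
  have hsign : ((-1 : ℂ) ^ Fintype.card ι) * (-1) ^ Fintype.card ι = 1 := by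
    rw [← mul_pow]; simp
  have hs : s * (1 - (∏ j, a j) * ∏ j, b j) = 0 := by
    linear_combination h_const - (-1) ^ Fintype.card ι * (∏ j, b j) * h_lead +
      s * (∏ j, a j) * (∏ j, b j) * hsign
  obtain rfl : s = 0 := (mul_eq_zero.1 hs).resolve_right (sub_ne_zero.2 h.symm)
  exact ⟨rfl, by simpa using h_lead⟩

variable {q : ℂ} {n : ℕ} {a b x : Fin (n + 1) → ℂ}

lemma conodal_mem_degreeLT {m : ℕ} (a : Fin m → ℂ) : conodal a ∈ degreeLT ℂ (m + 1) := by
  rw [mem_degreeLT]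
  refine (degree_le_of_natDegree_le (natDegree_conodal_le a)).trans_lt ?_
  rw [Fintype.card_fin]
  exact_mod_cast m.lt_succ_self

lemma tsum_jacksonTerm_mul_dual_nodal_eq_zero (hq0 : q ≠ 0) (hq1 : ‖q‖ < 1) (hx : ∀ i, x i ≠ 0)
    (hxq : QDistinct q x) (h : ‖∏ j, a j‖ * ‖∏ j, b j‖ < 1) {φ : Module.Dual ℂ ℂ[X]}
    (ha : φ (conodal a) = 0) (hb : φ (Lagrange.nodal univ b) = 0) :
    ∑' l : rootLattice (Fin (n + 1)), jacksonTerm q a b (latticePoint q x l) *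
      φ (Lagrange.nodal univ (latticePoint q x l)) = 0 := by
  rcases eq_or_ne (φ.domRestrict (degreeLT ℂ (n + 1 + 1))) 0 with hφ | hφ
  · have hφν (z : Fin (n + 1) → ℂ) : φ (Lagrange.nodal univ z) = 0 :=
      LinearMap.congr_fun hφ ⟨_, nodal_mem_degreeLT z⟩
    simp only [hφν, mul_zero, tsum_zero]
  have hab : (∏ j, a j) * ∏ j, b j ≠ 1 := fun hab => by
    rw [← norm_mul, hab, norm_one] at h
    exact h.false
  have hli := linearIndependent_conodal_nodal hab
  obtain ⟨c, w, hdeg, hmem, hdet⟩ := exists_dual_nodal_mul_det_vandermonde_eq hφ hli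
    (Fin.forall_fin_two.2 ⟨conodal_mem_degreeLT a, nodal_mem_degreeLT b⟩)
    (Fin.forall_fin_two.2 ⟨ha, hb⟩)
  have vanish := tsum_kernel_mul_det_eq_zero hq0 hq1 hx h hdeg (hmem 0) (hmem 1)
    (hli.injective.ne zero_ne_one)
  have term (l : rootLattice (Fin (n + 1))) : jacksonTerm q a b (latticePoint q x l) *
      φ (Lagrange.nodal univ (latticePoint q x l)) = c * (kernel q a b (latticePoint q x l) *
        (Matrix.of fun i k => (w k).eval (latticePoint q x l i)).det) := by
    rw [jacksonTerm_eq_kernel_mul (latticePoint_injective hq0 hx hxq l)]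
    linear_combination kernel q a b (latticePoint q x l) * hdet (latticePoint q x l)
  rw [tsum_congr term, tsum_mul_left, vanish, mul_zero]

lemma exists_dual_conodal_nodal {m : ℕ} (a b : Fin m → ℂ) {j : Fin m} (hj : a j ≠ 0) :
    ∃ φ : Module.Dual ℂ ℂ[X], φ (conodal a) = 0 ∧ φ (Lagrange.nodal univ b) = 0 ∧
      ∀ z : Fin m → ℂ, φ (Lagrange.nodal univ z) =
        (1 - (∏ k, a k) * ∏ k, b k) * ∏ k, (1 - a j * z k) -
          (1 - (∏ k, a k) * ∏ k, z k) * ∏ k, (1 - a j * b k) := by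
  have hsign : ((-1 : ℂ) ^ m) * (-1) ^ m = 1 := by rw [← mul_pow]; simp
  have heval (z : Fin m → ℂ) :
      a j ^ m * (Lagrange.nodal univ z).eval (a j)⁻¹ = ∏ k, (1 - a j * z k) := by
    have hpow : a j ^ m = ∏ _k : Fin m, a j := by simp
    rw [Lagrange.eval_nodal, hpow, ← prod_mul_distrib]
    exact prod_congr rfl fun k _ => by rw [mul_sub, mul_inv_cancel₀ hj]
  have heval₀ : (conodal a).eval (a j)⁻¹ = 0 := by
    rw [eval_conodal]
    exact prod_eq_zero (mem_univ j) (by rw [mul_inv_cancel₀ hj, sub_self])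
  have hcoeff := coeff_conodal_card a
  have hcoeff' (z : Fin m → ℂ) := coeff_nodal_card z
  have heval_zero (z : Fin m → ℂ) := eval_nodal_zero z
  simp only [Fintype.card_fin] at hcoeff hcoeff' heval_zero
  let F := ∏ k, (1 - a j * b k)
  let φ : Module.Dual ℂ ℂ[X] := ((1 - (∏ k, a k) * ∏ k, b k) * a j ^ m) • leval (a j)⁻¹ +
    ((-1) ^ m * (∏ k, a k) * F) • leval 0 - F • lcoeff ℂ m
  have hφ (z : Fin m → ℂ) : φ (Lagrange.nodal univ z) =
      (1 - (∏ k, a k) * ∏ k, b k) * ∏ k, (1 - a j * z k) - (1 - (∏ k, a k) * ∏ k, z k) * F := by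
    simp only [φ, LinearMap.sub_apply, LinearMap.add_apply, LinearMap.smul_apply, leval_apply,
      lcoeff_apply, smul_eq_mul, mul_assoc, heval, heval_zero, hcoeff']
    linear_combination (∏ k, a k) * F * (∏ k, z k) * hsign
  refine ⟨φ, ?_, by rw [hφ]; simp only [F]; ring, hφ⟩
  simp only [φ, LinearMap.sub_apply, LinearMap.add_apply, LinearMap.smul_apply, leval_apply,
    lcoeff_apply, smul_eq_mul, heval₀, hcoeff, eval_conodal, mul_zero, sub_zero, prod_const_one]
  ring

lemma weight_update {ι : Type*} [Fintype ι] [DecidableEq ι] (hq1 : ‖q‖ < 1) (a b : ι → ℂ) (j : ι)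
    (u : ℂ) :
    weight q (Function.update a j (q * a j)) b u * (1 - q * a j * u) = weight q a b u := by
  rw [weight, weight, Fintype.prod_eq_mul_prod_compl j, Function.update_self,
    Fintype.prod_eq_mul_prod_compl j fun k => qp q (q * a k * u) * qp q (q * b k * u⁻¹),
    prod_congr rfl fun k hk => by rw [Function.update_of_ne (by simpa using hk)],
    qp_eq_mul hq1 (q * a j * u), ← mul_assoc q (q * a j) u]
  ring

lemma jacksonTerm_update {m : ℕ} (hq1 : ‖q‖ < 1) (a b z : Fin m → ℂ) (j : Fin m) :
    jacksonTerm q (Function.update a j (q * a j)) b z * ∏ k, (1 - q * a j * z k) =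
      jacksonTerm q a b z := by
  simp only [jacksonTerm, div_mul_eq_mul_div, ← prod_mul_distrib, weight_update hq1]

lemma norm_jacksonTerm_le (hq1 : ‖q‖ < 1) {a' b' z : Fin (n + 1) → ℂ}
    (ha : ∀ j, ‖a j‖ ≤ ‖a' j‖) (hb : ∀ j, ‖b j‖ ≤ ‖b' j‖) (hz : Function.Injective z) :
    ‖jacksonTerm q a b z‖ ≤ kernelMajorant q n a' b' z := by
  rw [jacksonTerm_eq_kernel_mul hz, ← one_mul (kernelMajorant _ _ _ _ _)]
  exact norm_kernel_mul_le hq1 ha hb (by simpa using norm_vandermonde_det_le z)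

lemma summable_kernelMajorant_of_balanced (hq0 : q ≠ 0) (hq1 : ‖q‖ < 1) (hx : ∀ i, x i ≠ 0)
    (h : ‖q * (∏ j, a j) * ∏ j, b j‖ < 1) :
    Summable fun l : rootLattice (Fin (n + 1)) => kernelMajorant q n a b (latticePoint q x l) := by
  refine summable_kernelMajorant hq0 hq1 n hx ?_
  rw [norm_mul, norm_mul] at h
  rw [pow_succ, mul_assoc (‖q‖ ^ n), mul_assoc (‖q‖ ^ n)]
  exact mul_lt_of_lt_one_right (pow_pos (norm_pos_iff.2 hq0) n) h

lemma summable_jacksonTerm (hq0 : q ≠ 0) (hq1 : ‖q‖ < 1) (hx : ∀ i, x i ≠ 0)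
    (hxq : QDistinct q x) (h : ‖q * (∏ j, a j) * ∏ j, b j‖ < 1) :
    Summable fun l : rootLattice (Fin (n + 1)) => jacksonTerm q a b (latticePoint q x l) :=
  .of_norm_bounded (summable_kernelMajorant_of_balanced hq0 hq1 hx h) fun l =>
    norm_jacksonTerm_le hq1 (fun _ => le_rfl) (fun _ => le_rfl)
      (latticePoint_injective hq0 hx hxq l)

lemma prod_update_mul {ι M : Type*} [Fintype ι] [DecidableEq ι] [CommMonoid M] (c : M) (a : ι → M)
    (j : ι) : ∏ k, Function.update a j (c * a j) k = c * ∏ k, a k := by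
  rw [prod_update_of_mem (mem_univ j), mul_assoc,
    ← prod_eq_mul_prod_sdiff_singleton_of_mem (mem_univ j)]

lemma jacksonSum_update (hq0 : q ≠ 0) (hq1 : ‖q‖ < 1) (hx : ∀ i, x i ≠ 0) (hxq : QDistinct q x)
    (h : ‖q * (∏ j, a j) * ∏ j, b j‖ < 1) (j : Fin (n + 1)) :
    (1 - q * (∏ k, a k) * ∏ k, b k) * jacksonSum q a b x =
      (1 - q * (∏ k, a k) * ∏ k, x k) * (∏ k, (1 - q * a j * b k)) *
        jacksonSum q (Function.update a j (q * a j)) b x := by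
  rcases eq_or_ne (a j) 0 with hj | hj
  · have hA : ∏ k, a k = 0 := prod_eq_zero (mem_univ j) hj
    rw [hA, hj, mul_zero, ← hj, Function.update_eq_self]
    simp [hj]
  set a' := Function.update a j (q * a j)
  have haj : a' j = q * a j := Function.update_self ..
  have hA : ∏ k, a' k = q * ∏ k, a k := prod_update_mul q a j
  obtain ⟨φ, hφa, hφb, hφ⟩ := exists_dual_conodal_nodal a' b (j := j) (by
    rw [haj]; exact mul_ne_zero hq0 hj)
  have vanish := tsum_jacksonTerm_mul_dual_nodal_eq_zero hq0 hq1 hx hxq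
    (by rwa [hA, ← norm_mul]) hφa hφb
  have term (l : rootLattice (Fin (n + 1))) : jacksonTerm q a' b (latticePoint q x l) *
      φ (Lagrange.nodal univ (latticePoint q x l)) =
        (1 - q * (∏ k, a k) * ∏ k, b k) * jacksonTerm q a b (latticePoint q x l) -
          (1 - q * (∏ k, a k) * ∏ k, x k) * (∏ k, (1 - q * a j * b k)) *
            jacksonTerm q a' b (latticePoint q x l) := by
    rw [hφ, hA, haj, prod_latticePoint hq0, ← jacksonTerm_update hq1 a b _ j]
    ring
  have h' : ‖q * (∏ j, a' j) * ∏ j, b j‖ < 1 := by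
    rw [hA, mul_assoc q, norm_mul]
    exact mul_lt_one_of_nonneg_of_lt_one_left (norm_nonneg q) hq1 h.le
  rw [tsum_congr term, ((summable_jacksonTerm hq0 hq1 hx hxq h).mul_left _).tsum_sub
    ((summable_jacksonTerm hq0 hq1 hx hxq h').mul_left _), tsum_mul_left, tsum_mul_left] at vanish
  exact sub_eq_zero.1 vanish

end Shift

/-! ### Evaluation -/

section Evaluation

open Filter Topology

lemma tprod_mul_eq_tprod_mul_of_tendsto {F u v : ℕ → ℂ} {L : ℂ} (hu : Multipliable u)
    (hv : Multipliable v) (hF : Tendsto F atTop (𝓝 L)) (h : ∀ k, u k * F k = v k * F (k + 1)) :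
    (∏' k, u k) * F 0 = (∏' k, v k) * L := by
  have iterate (k : ℕ) : (∏ i ∈ range k, u i) * F 0 = (∏ i ∈ range k, v i) * F k := by
    induction k with
    | zero => simp
    | succ k ih =>
      rw [prod_range_succ, prod_range_succ]
      linear_combination u k * ih + (∏ i ∈ range k, v i) * h k
  refine tendsto_nhds_unique (hu.hasProd.tendsto_prod_nat.mul_const _) ?_
  simp only [iterate]
  exact hv.hasProd.tendsto_prod_nat.mul hF

variable {q : ℂ} {n : ℕ} {a b x : Fin (n + 1) → ℂ}

lemma tendsto_jacksonSum {α : Type*} {𝓕 : Filter α} (hq0 : q ≠ 0) (hq1 : ‖q‖ < 1)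
    (hx : ∀ i, x i ≠ 0) (hxq : QDistinct q x) (h : ‖q * (∏ j, a j) * ∏ j, b j‖ < 1)
    {A : α → Fin (n + 1) → ℂ} {a₀ : Fin (n + 1) → ℂ} (hA : Tendsto A 𝓕 (𝓝 a₀))
    (hle : ∀ s j, ‖A s j‖ ≤ ‖a j‖) :
    Tendsto (fun s => jacksonSum q (A s) b x) 𝓕 (𝓝 (jacksonSum q a₀ b x)) := by
  refine tendsto_tsum_of_dominated_convergence
    (summable_kernelMajorant_of_balanced hq0 hq1 hx h) (fun l => ?_)
    (.of_forall fun s l => norm_jacksonTerm_le hq1 (hle s) (fun _ => le_rfl)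
      (latticePoint_injective hq0 hx hxq l))
  refine (tendsto_finsetProd _ fun i _ => tendsto_finsetProd _ fun j _ => ?_).div_const _
  exact (((continuous_qp hq1).tendsto _).comp
    (((tendsto_pi_nhds.1 hA j).const_mul q).mul_const _)).mul_const _

lemma jacksonSum_update_zero (hq0 : q ≠ 0) (hq1 : ‖q‖ < 1) (hx : ∀ i, x i ≠ 0)
    (hxq : QDistinct q x) (h : ‖q * (∏ j, a j) * ∏ j, b j‖ < 1) (j : Fin (n + 1)) :
    qp q (q * (∏ k, a k) * ∏ k, b k) * jacksonSum q a b x =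
      qp q (q * (∏ k, a k) * ∏ k, x k) * (∏ k, qp q (q * a j * b k)) *
        jacksonSum q (Function.update a j 0) b x := by
  let A (k : ℕ) : Fin (n + 1) → ℂ := Function.update a j (q ^ k * a j)
  have hpow (k : ℕ) : ‖q ^ k‖ ≤ 1 := by
    rw [norm_pow]
    exact pow_le_one₀ (norm_nonneg q) hq1.le
  have hle (k : ℕ) (i : Fin (n + 1)) : ‖A k i‖ ≤ ‖a i‖ := by
    rcases eq_or_ne i j with rfl | hi
    · simpa only [A, Function.update_self, norm_mul] using
        mul_le_of_le_one_left (norm_nonneg (a i)) (hpow k)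
    · simp only [A, Function.update_of_ne hi, le_refl]
  have hA : Tendsto A atTop (𝓝 (Function.update a j 0)) := by
    have h₀ := (tendsto_pow_atTop_nhds_zero_of_norm_lt_one hq1).mul_const (a j)
    rw [zero_mul] at h₀
    exact tendsto_const_nhds.update j h₀
  have step (k : ℕ) : (1 - q ^ k * (q * (∏ i, a i) * ∏ i, b i)) * jacksonSum q (A k) b x =
      ((1 - q ^ k * (q * (∏ i, a i) * ∏ i, x i)) * ∏ i, (1 - q ^ k * (q * a j * b i))) *
        jacksonSum q (A (k + 1)) b x := by
    have hprod (P : ℂ) : q * (∏ i, A k i) * P = q ^ k * (q * (∏ i, a i) * P) := by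
      rw [prod_update_mul]; ring
    have hk := jacksonSum_update hq0 hq1 hx hxq (a := A k) (b := b) (by
      rw [hprod, norm_mul]
      exact (mul_le_of_le_one_left (norm_nonneg _) (hpow k)).trans_lt h) j
    have hsucc : Function.update (A k) j (q * A k j) = A (k + 1) := by
      simp only [A, Function.update_idem, Function.update_self, pow_succ', mul_assoc]
    have hAj (i : Fin (n + 1)) : q * A k j * b i = q ^ k * (q * a j * b i) := by
      simp only [A, Function.update_self]; ring
    simpa only [hprod, hsucc, hAj] using hk
  have hmult := multipliable_one_sub_pow_mul hq1
  have hlim := tprod_mul_eq_tprod_mul_of_tendsto (hmult _)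
    ((hmult _).mul (multipliable_prod fun i _ => hmult (q * a j * b i)))
    (tendsto_jacksonSum hq0 hq1 hx hxq h hA hle) step
  rw [(hmult _).tprod_mul (multipliable_prod fun i _ => hmult _),
    Multipliable.tprod_finsetProd fun i _ => hmult _] at hlim
  simpa only [qp, A, pow_zero, one_mul, Function.update_eq_self] using hlim

lemma jacksonSum_piecewise_zero (hq0 : q ≠ 0) (hq1 : ‖q‖ < 1) (hx : ∀ i, x i ≠ 0)
    (hxq : QDistinct q x) (h : ‖q * (∏ j, a j) * ∏ j, b j‖ < 1) {s : Finset (Fin (n + 1))}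
    (hs : s.Nonempty) :
    qp q (q * (∏ k, a k) * ∏ k, b k) * jacksonSum q a b x =
      qp q (q * (∏ k, a k) * ∏ k, x k) * (∏ i ∈ s, ∏ k, qp q (q * a i * b k)) *
        jacksonSum q (s.piecewise 0 a) b x := by
  induction hs using Finset.Nonempty.cons_induction with
  | singleton i =>
    rw [prod_singleton, piecewise_singleton]
    exact jacksonSum_update_zero hq0 hq1 hx hxq h i
  | cons i s hi hs ih =>
    obtain ⟨j, hj⟩ := hs
    have hprod : ∏ k, s.piecewise 0 a k = 0 :=
      prod_eq_zero (mem_univ j) (s.piecewise_eq_of_mem 0 a hj)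
    have hi_step := jacksonSum_update_zero hq0 hq1 hx hxq (a := s.piecewise 0 a) (b := b)
      (by simp [hprod]) i
    simp only [hprod, mul_zero, zero_mul, qp_zero, one_mul,
      s.piecewise_eq_of_notMem 0 a hi] at hi_step
    rw [ih, hi_step, cons_eq_insert, prod_insert hi, piecewise_insert, Pi.zero_apply]
    ring

lemma jacksonSum_zero_left (hq0 : q ≠ 0) (hq1 : ‖q‖ < 1) (hx : ∀ i, x i ≠ 0)
    (hxq : QDistinct q x) (h : ‖q * (∏ j, a j) * ∏ j, b j‖ < 1) :
    qp q (q * (∏ k, a k) * ∏ k, b k) * jacksonSum q a b x =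
      qp q (q * (∏ k, a k) * ∏ k, x k) * (∏ i, ∏ k, qp q (q * a i * b k)) *
        jacksonSum q 0 b x := by
  simpa using jacksonSum_piecewise_zero hq0 hq1 hx hxq h univ_nonempty

lemma jacksonSum_inv {m : ℕ} (q : ℂ) (a b x : Fin m → ℂ) :
    jacksonSum q a b x⁻¹ = jacksonSum q b a x := by
  rw [jacksonSum, ← (Equiv.neg (rootLattice (Fin m))).tsum_eq]
  refine tsum_congr fun l => ?_
  have hdenom (z : Fin m → ℂ) : weylDenom q z⁻¹ = weylDenom q z := by
    refine prod_congr rfl fun i _ => prod_congr rfl fun j _ => ?_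
    simp only [Pi.inv_apply, mul_div_assoc, inv_div_inv]
    exact mul_comm _ _
  rw [Equiv.neg_apply, AddSubgroup.coe_neg, latticePoint_neg, jacksonTerm, jacksonTerm, hdenom]
  simp only [Pi.inv_apply, weight_inv]

lemma jacksonSum_mul_eq (hq0 : q ≠ 0) (hq1 : ‖q‖ < 1) (hx : ∀ i, x i ≠ 0)
    (hxq : QDistinct q x) (h : ‖q * (∏ j, a j) * ∏ j, b j‖ < 1) :
    qp q (q * (∏ k, a k) * ∏ k, b k) * jacksonSum q a b x =
      qp q (q * (∏ k, a k) * ∏ k, x k) * qp q (q * (∏ k, b k) * (∏ k, x k)⁻¹) *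
        (∏ i, ∏ k, qp q (q * a i * b k)) * jacksonSum q 0 0 x := by
  have hb : jacksonSum q 0 b x =
      qp q (q * (∏ k, b k) * (∏ k, x k)⁻¹) * jacksonSum q 0 0 x := by
    simpa [qp_zero, jacksonSum_inv] using
      jacksonSum_zero_left hq0 hq1 (x := x⁻¹) (fun i => inv_ne_zero (hx i)) hxq.inv
        (a := b) (b := 0) (by simp)
  rw [jacksonSum_zero_left hq0 hq1 hx hxq h, hb]
  ring

lemma weylDenom_ne_zero {m : ℕ} (hq1 : ‖q‖ < 1) {x : Fin m → ℂ} (hxq : QDistinct q x) :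
    weylDenom q x ≠ 0 := by
  have factor {i j : Fin m} (hij : i ≠ j) : qp q (q * x i / x j) ≠ 0 :=
    qp_ne_zero hq1 fun k hk => hxq i j hij (-(k + 1 : ℕ)) <| by
      rw [zpow_neg, zpow_natCast]
      exact eq_inv_of_mul_eq_one_right (by rw [← hk]; ring)
  exact prod_ne_zero_iff.2 fun i _ => prod_ne_zero_iff.2 fun j hj =>
    mul_ne_zero (factor (mem_Ioi.1 hj).ne) (factor (mem_Ioi.1 hj).ne')

lemma prod_weight_inv_zero {m : ℕ} (q : ℂ) {x : Fin m → ℂ} (hx : ∀ i, x i ≠ 0) :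
    ∏ i, weight q x⁻¹ 0 (x i) = qp q q ^ m * weylDenom q x := by
  have hdiag (i : Fin m) :
      weight q x⁻¹ 0 (x i) = qp q q * ∏ j ∈ {i}ᶜ, qp q (q * x i / x j) := by
    rw [weight, Fintype.prod_eq_mul_prod_compl i]
    simp [qp_zero, hx i, mul_assoc, div_eq_mul_inv, mul_comm (x i)]
  rw [prod_congr rfl fun i _ => hdiag i, prod_mul_distrib, prod_const, card_univ, Fintype.card_fin,
    weylDenom, ← prod_prod_Ioi_mul_eq_prod_prod_off_diag fun j i => qp q (q * x i / x j)]

/-- Any root lattice vector other than `0` has a negative coordinate, which makes its term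
vanish. -/
lemma jacksonSum_inv_zero {m : ℕ} (hq0 : q ≠ 0) (hq1 : ‖q‖ < 1) {x : Fin m → ℂ}
    (hx : ∀ i, x i ≠ 0) (hxq : QDistinct q x) : jacksonSum q x⁻¹ 0 x = qp q q ^ m := by
  rw [jacksonSum, tsum_eq_single 0 fun l hl => ?_]
  · rw [AddSubgroup.coe_zero, latticePoint_zero, jacksonTerm, prod_weight_inv_zero q hx,
      mul_div_cancel_right₀ _ (weylDenom_ne_zero hq1 hxq)]
  obtain ⟨i, hi⟩ : ∃ i, (l : Fin m → ℤ) i < 0 := by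
    by_contra! hnonneg
    have hzero := (sum_eq_zero_iff_of_nonneg fun i _ => hnonneg i).1 (mem_rootLattice.1 l.2)
    exact hl (Subtype.ext (funext fun i => hzero i (mem_univ i)))
  have hqp : qp q (q * x⁻¹ i * latticePoint q x l i) = 0 := by
    rw [latticePoint, Pi.inv_apply, mul_assoc, inv_mul_cancel_left₀ (hx i), ← zpow_one_add₀ hq0]
    exact qp_zpow_eq_zero hq0 hq1 (by omega)
  have hweight : weight q x⁻¹ 0 (latticePoint q x l i) = 0 :=
    prod_eq_zero (mem_univ i) (by rw [hqp, zero_mul])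
  rw [jacksonTerm, prod_eq_zero (mem_univ i) hweight, zero_div]

/-- Macdonald's identity: compare the evaluation with the one-term sum. -/
lemma jacksonSum_zero_zero (hq0 : q ≠ 0) (hq1 : ‖q‖ < 1) (hx : ∀ i, x i ≠ 0)
    (hxq : QDistinct q x) : jacksonSum q 0 0 x = qp q q ^ n := by
  have hprod : (∏ i, x i)⁻¹ * ∏ i, x i = 1 :=
    inv_mul_cancel₀ (prod_ne_zero_iff.2 fun i _ => hx i)
  have h : qp q q ^ (n + 1) = qp q q * jacksonSum q 0 0 x := by
    simpa [qp_zero, jacksonSum_inv_zero hq0 hq1 hx hxq, mul_assoc q, hprod] using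
      jacksonSum_zero_left hq0 hq1 hx hxq (a := x⁻¹) (b := 0) (by simp)
  rw [pow_succ'] at h
  exact (mul_left_cancel₀ (qp_ne_zero_of_norm_lt_one hq1 hq1) h).symm

end Evaluation

/-! ### The Gustafson lattice -/

section GustafsonLattice

variable {q d : ℂ} {n : ℕ} {x : Fin n → ℂ}

/-- The point `(x₁, …, x_n, d x₁⁻¹⋯x_n⁻¹)`, which completes `x` to coordinate product `d`. -/
noncomputable def completion (d : ℂ) (x : Fin n → ℂ) : Fin (n + 1) → ℂ :=
  Fin.snoc x (d * (∏ k, x k)⁻¹)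

lemma completion_ne_zero (hd : d ≠ 0) (hx : ∀ i, x i ≠ 0) (i : Fin (n + 1)) :
    completion d x i ≠ 0 := by
  refine Fin.lastCases ?_ (fun i => ?_) i
  · simpa [completion, hd] using prod_ne_zero_iff.2 fun i _ => hx i
  · simpa [completion] using hx i

lemma prod_completion (d : ℂ) (hx : ∀ i, x i ≠ 0) : ∏ i, completion d x i = d := by
  have h : ∏ i, x i ≠ 0 := prod_ne_zero_iff.2 fun i _ => hx i
  simp only [completion, Fin.prod_univ_castSucc, Fin.snoc_castSucc, Fin.snoc_last]
  field_simp

lemma qDistinct_of_lt {m : ℕ} {y : Fin m → ℂ}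
    (h : ∀ i j, i < j → ∀ l : ℤ, y i / y j ≠ q ^ l) : QDistinct q y := by
  intro i j hij l hl
  rcases hij.lt_or_gt with hlt | hlt
  · exact h i j hlt l hl
  · exact h j i hlt (-l) (by rw [zpow_neg, ← hl, inv_div])

lemma qDistinct_completion (hxx : ∀ i j, i < j → ∀ m : ℤ, x i / x j ≠ q ^ m)
    (hxd : ∀ i, ∀ m : ℤ, x i * (∏ k, x k) * d⁻¹ ≠ q ^ m) : QDistinct q (completion d x) := by
  refine qDistinct_of_lt fun i j hij m => ?_
  obtain ⟨i, rfl⟩ := Fin.exists_castSucc_eq.2 (Fin.ne_last_of_lt hij)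
  induction j using Fin.lastCases with
  | last =>
    convert hxd i m using 1
    simp only [completion, Fin.snoc_castSucc, Fin.snoc_last, div_eq_mul_inv, mul_inv, inv_inv]
    ring
  | cast j => simpa [completion] using hxx i j (Fin.castSucc_lt_castSucc_iff.1 hij) m

lemma gz_eq_latticePoint (hq0 : q ≠ 0) (d : ℂ) (x : Fin n → ℂ) (ν : Fin n → ℤ) :
    gz q d x ν = latticePoint q (completion d x) (rootLatticeEquiv n ν) := by
  ext i
  refine Fin.lastCases ?_ (fun i => ?_) i
  · simp only [gz, latticePoint, completion, rootLatticeEquiv, Equiv.coe_fn_mk, Fin.snoc_last,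
      prod_mul_distrib, prod_zpow_eq_zpow_sum hq0, mul_inv, zpow_neg, mul_assoc]
  · simp [gz, latticePoint, completion, rootLatticeEquiv]

lemma gReg_eq_jacksonSum (hq0 : q ≠ 0) (d : ℂ) (a b : Fin (n + 1) → ℂ) (x : Fin n → ℂ) :
    gReg q d a b x = (1 - q) ^ n * jacksonSum q a⁻¹ b⁻¹ (completion d x) := by
  rw [gReg, jacksonSum, ← (rootLatticeEquiv n).tsum_eq]
  simp only [← gz_eq_latticePoint hq0]
  rfl

lemma g0Sum_eq_jacksonSum (hq0 : q ≠ 0) (d : ℂ) (x : Fin n → ℂ) :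
    g0Sum q d x = (1 - q) ^ n * jacksonSum q 0 0 (completion d x) := by
  rw [g0Sum, jacksonSum, ← (rootLatticeEquiv n).tsum_eq]
  simp [← gz_eq_latticePoint hq0, g0Term, jacksonTerm, weight, weylDenom, qp_zero]

end GustafsonLattice

end Gustafson

open Gustafson in
theorem gustafson_reg_via_macdonald_general {q : ℂ} (hq0 : q ≠ 0) (hq1 : ‖q‖ < 1) {n : ℕ}
    {a b : Fin (n + 1) → ℂ} {d : ℂ} (hd : d ≠ 0) (hbal : ‖q‖ < ‖(∏ i, a i) * ∏ i, b i‖)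
    {x : Fin n → ℂ} (hx : ∀ i, x i ≠ 0) (hxx : ∀ i j, i < j → ∀ m : ℤ, x i / x j ≠ q ^ m)
    (hxd : ∀ i, ∀ m : ℤ, x i * (∏ k, x k) * d⁻¹ ≠ q ^ m) :
    gReg q d a b x =
        g0Sum q d x *
          (qp q (q * (∏ i, a i)⁻¹ * d) * qp q (q * (∏ i, b i)⁻¹ * d⁻¹) *
            ∏ i, ∏ j, qp q (q * (a i)⁻¹ * (b j)⁻¹)) /
          qp q (q * (∏ i, a i)⁻¹ * (∏ i, b i)⁻¹) ∧
      g0Sum q d x = (1 - q) ^ n * qp q q ^ n := by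
  have hX := completion_ne_zero hd hx
  have hXq := qDistinct_completion hxx hxd
  have hnorm : ‖q * (∏ i, a i)⁻¹ * (∏ i, b i)⁻¹‖ < 1 := by
    rw [mul_assoc, ← mul_inv, ← div_eq_mul_inv, norm_div]
    exact (div_lt_one ((norm_nonneg q).trans_lt hbal)).2 hbal
  have heval := jacksonSum_mul_eq hq0 hq1 hX hXq (a := a⁻¹) (b := b⁻¹)
    (by simpa only [Pi.inv_apply, prod_inv_distrib] using hnorm)
  simp only [Pi.inv_apply, prod_inv_distrib, prod_completion d hx] at heval
  have hzero := jacksonSum_zero_zero hq0 hq1 hX hXq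
  rw [hzero] at heval
  rw [gReg_eq_jacksonSum hq0, g0Sum_eq_jacksonSum hq0, hzero]
  refine ⟨?_, rfl⟩
  rw [eq_div_iff (qp_ne_zero_of_norm_lt_one hq1 hnorm)]
  linear_combination (1 - q) ^ n * heval

/-- Corollary 5.7: `𝒦(x)` in terms of `𝒦₀(x)`, and the Macdonald identity for
`A_n⁽¹⁾` in Milne's form. -/
theorem gustafson_reg_via_macdonald
    (q : ℝ) (hq0 : 0 < q) (hq1 : q < 1) (n : ℕ) (hn : 1 ≤ n)
    (a b : Fin (n + 1) → ℂ) (ha : ∀ i, a i ≠ 0) (hb : ∀ i, b i ≠ 0)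
    (d : ℂ) (hd : d ≠ 0)
    (hbal : (q : ℝ) < ‖(∏ i, a i) * ∏ i, b i‖)
    (x : Fin n → ℂ) (hx : ∀ i, x i ≠ 0)
    (hxx : ∀ i j, i < j → ∀ m : ℤ, x i / x j ≠ (q : ℂ) ^ m)
    (hxd : ∀ i, ∀ m : ℤ, x i * (∏ k, x k) * d⁻¹ ≠ (q : ℂ) ^ m) :
    gReg (q : ℂ) d a b x =
        g0Sum (q : ℂ) d x *
          (qp (q : ℂ) ((q : ℂ) * (∏ i, a i)⁻¹ * d) *
              qp (q : ℂ) ((q : ℂ) * (∏ i, b i)⁻¹ * d⁻¹) *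
              ∏ i, ∏ j, qp (q : ℂ) ((q : ℂ) * (a i)⁻¹ * (b j)⁻¹)) /
          qp (q : ℂ) ((q : ℂ) * (∏ i, a i)⁻¹ * (∏ i, b i)⁻¹) ∧
      g0Sum (q : ℂ) d x = (1 - (q : ℂ)) ^ n * qp (q : ℂ) (q : ℂ) ^ n := by
  exact gustafson_reg_via_macdonald_general (by exact_mod_cast hq0.ne')
    (by simpa [abs_of_pos hq0] using hq1) hd (by simpa [abs_of_pos hq0] using hbal) hx hxx hxd
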